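/- Shift continuity of piecewise H¹ functions: Let 𝒯_h be a shape-regular triangulation of a bounded polygon Ω with shape regularity constant 𝒦, and let ũ denote the extension of u ∈ H¹_h by zero to ℝ². There is a constant C depending only on Ω and 𝒦 such that for every vector ρ ∈ ℝ², ∫_{ℝ²} (ũ(x + ρ) − ũ(x))² dx ≤ C |ρ| ‖u‖²_{H¹_h}. -/

import Mathlib

open MeasureTheory Set
open scoped Classical

noncomputable section

abbrev Pt : Type := EuclideanSpace ℝ (Fin 2)

structure Tri where
  A : Pt
  B : Pt
  C : Pt

namespace Tri

def cross (t : Tri) : ℝ :=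
  (t.B 0 - t.A 0) * (t.C 1 - t.A 1) - (t.B 1 - t.A 1) * (t.C 0 - t.A 0)

/-- Non-degeneracy (the three vertices are not collinear). -/
def Nondeg (t : Tri) : Prop := t.cross ≠ 0

def area (t : Tri) : ℝ := |t.cross| / 2

def la (t : Tri) : ℝ := dist t.B t.C
def lb (t : Tri) : ℝ := dist t.A t.C
def lc (t : Tri) : ℝ := dist t.A t.B

/-- Inradius of a triangle: `r = 2·Area/(a+b+c)`. -/
def inradius (t : Tri) : ℝ := 2 * t.area / (t.la + t.lb + t.lc)

/-- Circumradius of a triangle: `R = abc/(4·Area)`. -/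
def circumradius (t : Tri) : ℝ := t.la * t.lb * t.lc / (4 * t.area)

/-- Shape regularity constant `R/r` of a triangle. -/
def shapeReg (t : Tri) : ℝ := t.circumradius / t.inradius

def closedHull (t : Tri) : Set Pt := convexHull ℝ {t.A, t.B, t.C}

def openHull (t : Tri) : Set Pt := interior t.closedHull

def edgeList (t : Tri) : List (Pt × Pt) := [(t.A, t.B), (t.B, t.C), (t.C, t.A)]

end Tri

/-- Two (oriented) edges coincide as unoriented segments. -/
def SameEdge (e e' : Pt × Pt) : Prop := e' = e ∨ e' = (e.2, e.1)

/-- Arclength integral of `f` over the straight segment from `p` to `q`. -/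
def segInt (p q : Pt) (f : Pt → ℝ) : ℝ :=
  dist p q * ∫ s in (0:ℝ)..1, f (p + s • (q - p))

/-- A bounded polygonal domain in the plane. -/
def IsPolygon (Ω : Set Pt) : Prop :=
  Ω.Nonempty ∧ Bornology.IsBounded Ω ∧
    ∃ S : Finset Tri, (∀ t ∈ S, t.Nondeg) ∧ Ω = interior (⋃ t ∈ S, t.closedHull)

/-- A (conforming) triangulation of the polygonal domain `Ω`. -/
structure Triangulation (Ω : Set Pt) where
  tris : Finset Tri
  nondeg : ∀ t ∈ tris, t.Nondeg
  cover : Ω = interior (⋃ t ∈ tris, t.closedHull)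
  disj : ∀ t ∈ tris, ∀ t' ∈ tris, t ≠ t' → t.openHull ∩ t'.openHull = ∅
  conforming : ∀ t ∈ tris, ∀ e ∈ t.edgeList,
      segment ℝ e.1 e.2 ⊆ frontier Ω ∨
      ∃ t' ∈ tris, t' ≠ t ∧ ∃ e' ∈ t'.edgeList, SameEdge e e'

namespace Triangulation

variable {Ω : Set Pt}

/-- All triangles have shape regularity constant at most `K`. -/
def ShapeRegular (T : Triangulation Ω) (K : ℝ) : Prop :=
  ∀ t ∈ T.tris, t.shapeReg ≤ K

/-- `‖u‖²_{L²(Ω)}` of a piecewise function. -/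
def sqL2 (T : Triangulation Ω) (u : Tri → Pt → ℝ) : ℝ :=
  ∑ t ∈ T.tris, ∫ x in t.openHull, (u t x) ^ 2

/-- `∫_{Ω_h} |∇u|²` of a piecewise function. -/
def gradSq (T : Triangulation Ω) (u : Tri → Pt → ℝ) : ℝ :=
  ∑ t ∈ T.tris, ∫ x in t.openHull, ‖fderiv ℝ (u t) x‖ ^ 2

/-- Contribution `Σ_{e shared by t₁,t₂} |e|⁻¹ ∫_e [u]²` of the common edges of `t₁, t₂`. -/
def edgeJump (u : Tri → Pt → ℝ) (t₁ t₂ : Tri) : ℝ :=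
  ((t₁.edgeList.map fun e =>
    if ∃ e' ∈ t₂.edgeList, SameEdge e e' then
      (dist e.1 e.2)⁻¹ * segInt e.1 e.2 (fun x => (u t₁ x - u t₂ x) ^ 2)
    else 0)).sum

/-- `Σ_{e ∈ ℰ⁰_h} |e|⁻¹ ∫_e [u]²` (each interior edge counted once, whence the `1/2`). -/
def jumpSq (T : Triangulation Ω) (u : Tri → Pt → ℝ) : ℝ :=
  (1/2) * ∑ t₁ ∈ T.tris, ∑ t₂ ∈ T.tris, if t₁ ≠ t₂ then edgeJump u t₁ t₂ else 0

/-- The squared `H¹_h` norm. -/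
def normSq (T : Triangulation Ω) (u : Tri → Pt → ℝ) : ℝ :=
  T.sqL2 u + T.gradSq u + T.jumpSq u

/-- `∫_{∂Ω} u²` via the traces from the triangles having a boundary edge. -/
def bdrySq (T : Triangulation Ω) (u : Tri → Pt → ℝ) : ℝ :=
  ∑ t ∈ T.tris, ((t.edgeList.map fun e =>
    if segment ℝ e.1 e.2 ⊆ frontier Ω then segInt e.1 e.2 (fun x => (u t x) ^ 2) else 0)).sum

/-- `u` is a piecewise `H¹` function subordinate to the triangulation. -/
def PwH1 (T : Triangulation Ω) (u : Tri → Pt → ℝ) : Prop :=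
  ∀ t ∈ T.tris, ContinuousOn (u t) t.closedHull ∧ DifferentiableOn ℝ (u t) t.openHull ∧
    IntegrableOn (fun x => (u t x) ^ 2) t.openHull ∧
    IntegrableOn (fun x => ‖fderiv ℝ (u t) x‖ ^ 2) t.openHull

/-- `v : ℝ² → ℝ` is the extension by zero of the piecewise function `u`. -/
def Glues (T : Triangulation Ω) (u : Tri → Pt → ℝ) (v : Pt → ℝ) : Prop :=
  (∀ t ∈ T.tris, ∀ x ∈ t.openHull, v x = u t x) ∧ ∀ x, x ∉ Ω → v x = 0

end Triangulation


/-! ## Part A : planar geometry of a triple -/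

def orient (P Q x : Pt) : ℝ := (Q 0 - P 0) * (x 1 - P 1) - (Q 1 - P 1) * (x 0 - P 0)

lemma orient_swap (P Q x : Pt) : orient Q P x = - orient P Q x := by unfold orient; ring

lemma orient_sum (P Q R x : Pt) :
    orient P Q x + orient Q R x + orient R P x = orient P Q R := by unfold orient; ring

lemma orient_cont (P Q : Pt) : Continuous (fun x => orient P Q x) := by unfold orient; fun_prop

lemma orient_comb (P Q x y : Pt) (a b : ℝ) (h : a + b = 1) :
    orient P Q (a • x + b • y) = a * orient P Q x + b * orient P Q y := by
  obtain rfl : b = 1 - a := by linarith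
  unfold orient; simp; ring

lemma orient_convex (P Q : Pt) (c : ℝ) : Convex ℝ {x | 0 ≤ orient P Q x * c} := by
  intro x hx y hy a b ha hb hab
  simp only [mem_ofPred_eq] at *
  rw [orient_comb _ _ _ _ _ _ hab]
  nlinarith [mul_nonneg ha hx, mul_nonneg hb hy]

lemma mem_hull_iff (P Q R x : Pt) (h : orient P Q R ≠ 0) :
    x ∈ convexHull ℝ ({P, Q, R} : Set Pt) ↔
      0 ≤ orient P Q x * orient P Q R ∧ 0 ≤ orient Q R x * orient P Q R ∧
        0 ≤ orient R P x * orient P Q R := by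
  constructor
  · intro hx
    have hc : Convex ℝ ({x | 0 ≤ orient P Q x * orient P Q R} ∩
        ({x | 0 ≤ orient Q R x * orient P Q R} ∩ {x | 0 ≤ orient R P x * orient P Q R})) :=
      (orient_convex _ _ _).inter ((orient_convex _ _ _).inter (orient_convex _ _ _))
    have hsub : ({P, Q, R} : Set Pt) ⊆ ({x | 0 ≤ orient P Q x * orient P Q R} ∩
        ({x | 0 ≤ orient Q R x * orient P Q R} ∩ {x | 0 ≤ orient R P x * orient P Q R})) := by
      have h1 : orient P Q P = 0 := by unfold orient; ring
      have h2 : orient P Q Q = 0 := by unfold orient; ring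
      have h3 : orient Q R Q = 0 := by unfold orient; ring
      have h4 : orient Q R R = 0 := by unfold orient; ring
      have h5 : orient R P P = 0 := by unfold orient; ring
      have h6 : orient R P R = 0 := by unfold orient; ring
      have h7 : orient Q R P = orient P Q R := by unfold orient; ring
      have h8 : orient R P Q = orient P Q R := by unfold orient; ring
      rintro y (rfl | rfl | rfl) <;> simp [*, mul_self_nonneg]
    exact convexHull_min hsub hc hx
  · rintro ⟨h1, h2, h3⟩
    have hcc : 0 < orient P Q R * orient P Q R := mul_self_pos.mpr h
    set c := orient P Q R with hc
    have e1 : orient P Q x * c / (c * c) = orient P Q x / c := by field_simp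
    have e2 : orient Q R x * c / (c * c) = orient Q R x / c := by field_simp
    have e3 : orient R P x * c / (c * c) = orient R P x / c := by field_simp
    have p1 : 0 ≤ orient P Q x / c := e1 ▸ div_nonneg h1 hcc.le
    have p2 : 0 ≤ orient Q R x / c := e2 ▸ div_nonneg h2 hcc.le
    have p3 : 0 ≤ orient R P x / c := e3 ▸ div_nonneg h3 hcc.le
    have hs : orient P Q x / c + orient Q R x / c + orient R P x / c = 1 := by
      rw [← add_div, ← add_div, orient_sum, ← hc, div_self h]
    have hx : x = (orient Q R x / c) • P + (orient R P x / c) • Q + (orient P Q x / c) • R := by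
      ext i
      fin_cases i
      · simp
        field_simp
        rw [hc]; unfold orient; ring
      · simp
        field_simp
        rw [hc]; unfold orient; ring
    have hconv := convex_convexHull ℝ ({P, Q, R} : Set Pt)
    have hP : P ∈ convexHull ℝ ({P, Q, R} : Set Pt) := subset_convexHull ℝ _ (by simp)
    have hQ : Q ∈ convexHull ℝ ({P, Q, R} : Set Pt) := subset_convexHull ℝ _ (by simp)
    have hR : R ∈ convexHull ℝ ({P, Q, R} : Set Pt) := subset_convexHull ℝ _ (by simp)
    have := hconv.sum_mem (t := Finset.univ) (w := ![orient Q R x / c, orient R P x / c, orient P Q x / c])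
      (z := ![P, Q, R]) (by intro i _; fin_cases i <;> simpa) (by simp [Fin.sum_univ_three]; linarith)
      (by intro i _; fin_cases i <;> simpa)
    rw [hx]
    simpa [Fin.sum_univ_three] using this

lemma orient_sub_smul (P Q x w : Pt) (δ : ℝ) :
    orient P Q (x - δ • w) = orient P Q x - δ * ((Q 0 - P 0) * w 1 - (Q 1 - P 1) * w 0) := by
  unfold orient; simp; ring

lemma interior_dir {S : Set Pt} {x : Pt} (hx : x ∈ interior S) (w : Pt) :
    ∃ δ : ℝ, 0 < δ ∧ x - δ • w ∈ S := by
  have hc : Filter.Tendsto (fun δ : ℝ => x - δ • w) (nhds 0) (nhds x) := by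
    have : Continuous (fun δ : ℝ => x - δ • w) := by fun_prop
    simpa using this.tendsto 0
  have h1 := hc (mem_interior_iff_mem_nhds.mp hx)
  obtain ⟨ε, hε, hb⟩ := Metric.mem_nhds_iff.mp h1
  refine ⟨ε / 2, by positivity, ?_⟩
  have : (ε / 2) ∈ Metric.ball (0 : ℝ) ε := by
    rw [Metric.mem_ball, Real.dist_eq, sub_zero, abs_of_pos (by positivity)]; linarith
  exact hb this

lemma mem_int_hull_iff (P Q R x : Pt) (h : orient P Q R ≠ 0) :
    x ∈ interior (convexHull ℝ ({P, Q, R} : Set Pt)) ↔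
      0 < orient P Q x * orient P Q R ∧ 0 < orient Q R x * orient P Q R ∧
        0 < orient R P x * orient P Q R := by
  have hcc : 0 < orient P Q R * orient P Q R := mul_self_pos.mpr h
  constructor
  · intro hx
    refine ⟨?_, ?_, ?_⟩
    · obtain ⟨δ, hδ, hm⟩ := interior_dir hx (R - P)
      have := ((mem_hull_iff P Q R _ h).mp hm).1
      rw [orient_sub_smul] at this
      have e : ((Q 0 - P 0) * (R - P) 1 - (Q 1 - P 1) * (R - P) 0) = orient P Q R := by
        unfold orient; simp
      rw [e] at this
      nlinarith [mul_pos hδ hcc]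
    · obtain ⟨δ, hδ, hm⟩ := interior_dir hx (P - Q)
      have := ((mem_hull_iff P Q R _ h).mp hm).2.1
      rw [orient_sub_smul] at this
      have e : ((R 0 - Q 0) * (P - Q) 1 - (R 1 - Q 1) * (P - Q) 0) = orient P Q R := by
        unfold orient; simp; ring
      rw [e] at this
      nlinarith [mul_pos hδ hcc]
    · obtain ⟨δ, hδ, hm⟩ := interior_dir hx (Q - R)
      have := ((mem_hull_iff P Q R _ h).mp hm).2.2
      rw [orient_sub_smul] at this
      have e : ((P 0 - R 0) * (Q - R) 1 - (P 1 - R 1) * (Q - R) 0) = orient P Q R := by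
        unfold orient; simp; ring
      rw [e] at this
      nlinarith [mul_pos hδ hcc]
  · rintro ⟨h1, h2, h3⟩
    have ho : IsOpen {y | 0 < orient P Q y * orient P Q R ∧ 0 < orient Q R y * orient P Q R ∧
        0 < orient R P y * orient P Q R} := by
      refine IsOpen.inter ?_ (IsOpen.inter ?_ ?_)
      · exact isOpen_lt continuous_const ((orient_cont _ _).mul continuous_const)
      · exact isOpen_lt continuous_const ((orient_cont _ _).mul continuous_const)
      · exact isOpen_lt continuous_const ((orient_cont _ _).mul continuous_const)
    refine interior_maximal ?_ ho ⟨h1, h2, h3⟩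
    rintro y ⟨a, b, c⟩
    exact (mem_hull_iff P Q R y h).mpr ⟨a.le, b.le, c.le⟩

/-- `P, Q, R` is a labelling of the vertices of `t`. -/
def Lab (t : Tri) (P Q R : Pt) : Prop :=
  (P = t.A ∧ Q = t.B ∧ R = t.C) ∨ (P = t.B ∧ Q = t.C ∧ R = t.A) ∨ (P = t.C ∧ Q = t.A ∧ R = t.B) ∨
  (P = t.A ∧ Q = t.C ∧ R = t.B) ∨ (P = t.B ∧ Q = t.A ∧ R = t.C) ∨ (P = t.C ∧ Q = t.B ∧ R = t.A)

lemma Lab.hull {t : Tri} {P Q R : Pt} (h : Lab t P Q R) :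
    t.closedHull = convexHull ℝ ({P, Q, R} : Set Pt) := by
  unfold Tri.closedHull
  congr 1
  rcases h with h | h | h | h | h | h <;> obtain ⟨rfl, rfl, rfl⟩ := h <;> ext x <;> simp <;> tauto

lemma Lab.orient_abs {t : Tri} {P Q R : Pt} (h : Lab t P Q R) : |orient P Q R| = |t.cross| := by
  have : orient P Q R = t.cross ∨ orient P Q R = - t.cross := by
    unfold orient Tri.cross
    rcases h with h | h | h | h | h | h <;> obtain ⟨rfl, rfl, rfl⟩ := h
    · left; ring
    · left; ring
    · left; ring
    · right; ring
    · right; ring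
    · right; ring
  rcases this with h | h <;> simp [h]

lemma Lab.orient_ne {t : Tri} {P Q R : Pt} (h : Lab t P Q R) (ht : t.Nondeg) : orient P Q R ≠ 0 := by
  rw [← abs_pos, h.orient_abs, abs_pos]; exact ht

lemma Lab.mem_open {t : Tri} {P Q R : Pt} (h : Lab t P Q R) (ht : t.Nondeg) (x : Pt) :
    x ∈ t.openHull ↔ 0 < orient P Q x * orient P Q R ∧ 0 < orient Q R x * orient P Q R ∧
        0 < orient R P x * orient P Q R := by
  unfold Tri.openHull
  rw [h.hull, mem_int_hull_iff _ _ _ _ (h.orient_ne ht)]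

lemma Lab.mem_closed {t : Tri} {P Q R : Pt} (h : Lab t P Q R) (ht : t.Nondeg) (x : Pt) :
    x ∈ t.closedHull ↔ 0 ≤ orient P Q x * orient P Q R ∧ 0 ≤ orient Q R x * orient P Q R ∧
        0 ≤ orient R P x * orient P Q R := by
  rw [h.hull, mem_hull_iff _ _ _ _ (h.orient_ne ht)]

/-- Sum over the three edges. -/
def es (t : Tri) (F : Pt × Pt → ℝ) : ℝ := (t.edgeList.map F).sum

lemma es_eq (t : Tri) (F : Pt × Pt → ℝ) : es t F = F (t.A, t.B) + F (t.B, t.C) + F (t.C, t.A) := by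
  unfold es Tri.edgeList; simp; ring

lemma Lab.es_eq {t : Tri} {P Q R : Pt} (h : Lab t P Q R) (F : Pt × Pt → ℝ)
    (hF : ∀ P Q, F (P, Q) = F (Q, P)) : es t F = F (P, Q) + F (P, R) + F (Q, R) := by
  rw [_root_.es_eq]
  rcases h with h | h | h | h | h | h <;> obtain ⟨rfl, rfl, rfl⟩ := h <;>
    rw [hF t.A t.B, hF t.B t.C, hF t.C t.A] <;> 
    linarith [hF t.A t.B, hF t.B t.C, hF t.C t.A]

lemma edge_lab {t : Tri} {e : Pt × Pt} (he : e ∈ t.edgeList) : ∃ R, Lab t e.1 e.2 R := by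
  simp only [Tri.edgeList, List.mem_cons, List.not_mem_nil, or_false] at he
  rcases he with rfl | rfl | rfl
  · exact ⟨t.C, by simp [Lab]⟩
  · exact ⟨t.A, by simp [Lab]⟩
  · exact ⟨t.B, by simp [Lab]⟩

lemma Lab.swap {t : Tri} {P Q R : Pt} (h : Lab t P Q R) : Lab t Q P R := by
  unfold Lab at *; tauto

lemma Lab.rot {t : Tri} {P Q R : Pt} (h : Lab t P Q R) : Lab t Q R P := by
  unfold Lab at *; tauto

lemma Lab.ne {t : Tri} {P Q R : Pt} (h : Lab t P Q R) (ht : t.Nondeg) : P ≠ Q := by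
  rintro rfl
  exact h.orient_ne ht (by unfold orient; ring)

/-- side-of-edge functional -/
def Sd (t : Tri) (P Q : Pt) : ℝ := orient P Q t.A + orient P Q t.B + orient P Q t.C

lemma Lab.Sd_eq {t : Tri} {P Q R : Pt} (h : Lab t P Q R) : Sd t P Q = orient P Q R := by
  unfold Sd
  rcases h with h | h | h | h | h | h <;> obtain ⟨rfl, rfl, rfl⟩ := h <;> unfold orient <;> ring

lemma Sd_swap (t : Tri) (P Q : Pt) : Sd t Q P = - Sd t P Q := by
  unfold Sd orient; ring

lemma exists_small (a b c d : ℝ) (ha : 0 < a) (hc : 0 < c) :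
    ∃ δ : ℝ, 0 < δ ∧ 0 < a + δ * b ∧ 0 < c + δ * d := by
  have h1 : ∀ᶠ δ in nhdsWithin (0:ℝ) (Ioi 0), 0 < a + δ * b := by
    have : ContinuousAt (fun δ : ℝ => a + δ * b) 0 := by fun_prop
    exact nhdsWithin_le_nhds (this.eventually (lt_mem_nhds (by simpa)))
  have h2 : ∀ᶠ δ in nhdsWithin (0:ℝ) (Ioi 0), 0 < c + δ * d := by
    have : ContinuousAt (fun δ : ℝ => c + δ * d) 0 := by fun_prop
    exact nhdsWithin_le_nhds (this.eventually (lt_mem_nhds (by simpa)))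
  obtain ⟨δ, ⟨h, h'⟩, h''⟩ := ((h1.and h2).and self_mem_nhdsWithin).exists
  exact ⟨δ, h'', h, h'⟩

/-- Two triangles on the same side of a common edge overlap. -/
lemma overlap {t t' : Tri} {P Q R R' : Pt} (h : Lab t P Q R) (h' : Lab t' P Q R')
    (ht : t.Nondeg) (ht' : t'.Nondeg) (hs : 0 < Sd t P Q * Sd t' P Q) :
    (t.openHull ∩ t'.openHull).Nonempty := by
  rw [h.Sd_eq, h'.Sd_eq] at hs
  have hc := h.orient_ne ht
  have hc' := h'.orient_ne ht'
  have hcc : 0 < orient P Q R * orient P Q R := mul_self_pos.mpr hc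
  have hcc' : 0 < orient P Q R' * orient P Q R' := mul_self_pos.mpr hc'
  set c := orient P Q R with hcd
  set c' := orient P Q R' with hcd'
  set m : Pt := (1/2 : ℝ) • P + (1/2 : ℝ) • Q with hm
  -- direction : R - P, from the midpoint
  obtain ⟨δ₂, hδ₂, ha', hb'⟩ := exists_small (c' * c' / 2)
     (-|((R' 0 - Q 0) * (R 1 - P 1) - (R' 1 - Q 1) * (R 0 - P 0)) * c'|)
    (c' * c' / 2) (-|((P 0 - R' 0) * (R 1 - P 1) - (P 1 - R' 1) * (R 0 - P 0)) * c'|)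
    (by positivity) (by positivity)
  obtain ⟨δ₃, hδ₃, ha'', hb''⟩ := exists_small (c * c / 2)
     (-|((R 0 - Q 0) * (R 1 - P 1) - (R 1 - Q 1) * (R 0 - P 0)) * c|)
    (c * c / 2) (-|((P 0 - R 0) * (R 1 - P 1) - (P 1 - R 1) * (R 0 - P 0)) * c|)
    (by positivity) (by positivity)
  set δ := min δ₂ δ₃
  have hδ : 0 < δ := lt_min hδ₂ hδ₃
  have hle2 : δ ≤ δ₂ := min_le_left _ _
  have hle3 : δ ≤ δ₃ := min_le_right _ _
  refine ⟨m + δ • (R - P), ?_, ?_⟩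
  · rw [h.mem_open ht]
    have e1 : orient P Q (m + δ • (R - P)) = δ * c := by
      rw [hcd, hm]; unfold orient; simp; ring
    have e2 : orient Q R (m + δ • (R - P)) = c / 2 + δ * ((R 0 - Q 0) * (R 1 - P 1) - (R 1 - Q 1) * (R 0 - P 0)) := by
      rw [hcd, hm]; unfold orient; simp; ring
    have e3 : orient R P (m + δ • (R - P)) = c / 2 + δ * ((P 0 - R 0) * (R 1 - P 1) - (P 1 - R 1) * (R 0 - P 0)) := by
      rw [hcd, hm]; unfold orient; simp; ring
    rw [e1, e2, e3, ← hcd]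
    refine ⟨by nlinarith [mul_pos hδ hcc], ?_, ?_⟩
    · set z := ((R 0 - Q 0) * (R 1 - P 1) - (R 1 - Q 1) * (R 0 - P 0))
      have := mul_le_mul_of_nonneg_right hle3 (abs_nonneg (z * c))
      have := mul_le_mul_of_nonneg_left (neg_abs_le (z * c)) hδ.le
      nlinarith
    · set z := ((P 0 - R 0) * (R 1 - P 1) - (P 1 - R 1) * (R 0 - P 0))
      have := mul_le_mul_of_nonneg_right hle3 (abs_nonneg (z * c))
      have := mul_le_mul_of_nonneg_left (neg_abs_le (z * c)) hδ.le
      nlinarith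
  · rw [h'.mem_open ht']
    have e1 : orient P Q (m + δ • (R - P)) = δ * c := by
      rw [hcd, hm]; unfold orient; simp; ring
    have e2 : orient Q R' (m + δ • (R - P)) = c' / 2 + δ * ((R' 0 - Q 0) * (R 1 - P 1) - (R' 1 - Q 1) * (R 0 - P 0)) := by
      rw [hcd', hm]; unfold orient; simp; ring
    have e3 : orient R' P (m + δ • (R - P)) = c' / 2 + δ * ((P 0 - R' 0) * (R 1 - P 1) - (P 1 - R' 1) * (R 0 - P 0)) := by
      rw [hcd', hm]; unfold orient; simp; ring
    rw [e1, e2, e3, ← hcd']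
    refine ⟨by nlinarith [mul_pos hδ hs], ?_, ?_⟩
    · set z := ((R' 0 - Q 0) * (R 1 - P 1) - (R' 1 - Q 1) * (R 0 - P 0))
      have := mul_le_mul_of_nonneg_right hle2 (abs_nonneg (z * c'))
      have := mul_le_mul_of_nonneg_left (neg_abs_le (z * c')) hδ.le
      nlinarith
    · set z := ((P 0 - R' 0) * (R 1 - P 1) - (P 1 - R' 1) * (R 0 - P 0))
      have := mul_le_mul_of_nonneg_right hle2 (abs_nonneg (z * c'))
      have := mul_le_mul_of_nonneg_left (neg_abs_le (z * c')) hδ.le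
      nlinarith

/-- consequences of shape regularity -/
lemma shape_bounds {t : Tri} (ht : t.Nondeg) {K : ℝ} (hK : t.shapeReg ≤ K) {P Q R : Pt}
    (h : Lab t P Q R) : dist P R ≤ (2 * |K| + 2) * dist P Q ∧
      dist P Q * dist P R ≤ (2 * |K| + 2) * |orient P Q R| := by
  have key : ∀ a b c : ℝ, 0 < a → 0 < b → 0 < c → ∀ X : ℝ, 0 < X → X ≤ a * b → X ≤ a * c → X ≤ b * c →
      a * b * c * (a + b + c) / (2 * X ^ 2) ≤ K →
      (b ≤ (2 * |K| + 2) * a ∧ a * b ≤ (2 * |K| + 2) * X) := by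
    intro a b c ha hb hc X hX h1 h2 h3 hk
    have hKpos : 0 < K := lt_of_lt_of_le (by positivity) hk
    rw [abs_of_pos hKpos]
    rw [div_le_iff₀ (by positivity)] at hk
    have s1 : b * (a + b + c) ≤ 2 * K * (a * c) := by
      have : X ^ 2 ≤ (a * c) * (a * c) := by nlinarith
      have : (a * c) * (b * (a + b + c)) ≤ (a * c) * (2 * K * (a * c)) := by nlinarith
      exact le_of_mul_le_mul_left this (by positivity)
    have s2 : b ≤ 2 * K * a := by
      have : b * c ≤ 2 * K * a * c := by nlinarith [mul_pos hb ha, mul_pos hb hb]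
      exact le_of_mul_le_mul_right this hc
    have s3 : b ≤ 2 * K * c := by
      have : b * a ≤ 2 * K * c * a := by nlinarith [mul_pos hb hc, mul_pos hb hb]
      exact le_of_mul_le_mul_right this ha
    refine ⟨by nlinarith, ?_⟩
    -- (a b)^2 ≤ (2K)^2 X^2
    have s4 : (a * b) ^ 2 ≤ (2 * K * X) ^ 2 := by
      have : a * b * c * a ≤ K * (2 * X ^ 2) := by
        nlinarith [mul_pos (mul_pos (mul_pos ha hb) hc) hb, mul_pos (mul_pos (mul_pos ha hb) hc) hc]
      have h5 : (a * b) ^ 2 ≤ 2 * K * (a * b * c * a) := by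
        nlinarith [mul_pos (mul_pos ha ha) hb]
      nlinarith
    have := abs_le_of_sq_le_sq s4 (by positivity)
    nlinarith [le_abs_self (a * b)]
  have hX : 0 < |orient P Q R| := abs_pos.mpr (h.orient_ne ht)
  have hPQ : 0 < dist P Q := dist_pos.mpr (h.ne ht)
  have hPR : 0 < dist P R := dist_pos.mpr (h.rot.rot.ne ht).symm
  have hQR : 0 < dist Q R := dist_pos.mpr (h.rot.ne ht)
  have hb : ∀ P Q R : Pt, |orient P Q R| ≤ dist P Q * dist P R := by
    intro P Q R
    rw [EuclideanSpace.dist_eq, EuclideanSpace.dist_eq, ← Real.sqrt_mul (by positivity)]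
    apply Real.abs_le_sqrt
    simp only [Fin.sum_univ_two, Real.dist_eq, sq_abs]
    unfold orient
    nlinarith [sq_nonneg ((Q 0 - P 0) * (R 0 - P 0) + (Q 1 - P 1) * (R 1 - P 1))]
  have b1 := hb P Q R
  have b2 : |orient P Q R| ≤ dist P Q * dist Q R := by
    have := hb Q P R
    rw [orient_swap, abs_neg, dist_comm Q P] at this
    exact this
  have b3 : |orient P Q R| ≤ dist P R * dist Q R := by
    have := hb R P Q
    rw [show orient R P Q = orient P Q R by unfold orient; ring, dist_comm R P, dist_comm R Q] at this
    exact this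
  refine key _ _ (dist Q R) hPQ hPR hQR _ hX b1 b2 b3 (le_trans (le_of_eq ?_) hK)
  rw [h.orient_abs] at *
  unfold Tri.shapeReg Tri.circumradius Tri.inradius Tri.area Tri.la Tri.lb Tri.lc
  have hprod : dist P Q * dist P R * dist Q R = dist t.B t.C * dist t.A t.C * dist t.A t.B := by
    rcases h with h | h | h | h | h | h <;> obtain ⟨rfl, rfl, rfl⟩ := h <;>
      rw [dist_comm t.A t.B, dist_comm t.A t.C, dist_comm t.B t.C] <;> ring_nf
  have hsum : dist P Q + dist P R + dist Q R = dist t.B t.C + dist t.A t.C + dist t.A t.B := by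
    rcases h with h | h | h | h | h | h <;> obtain ⟨rfl, rfl, rfl⟩ := h <;>
      rw [dist_comm t.A t.B, dist_comm t.A t.C, dist_comm t.B t.C] <;> ring_nf
  rw [← hprod, ← hsum]
  have : 0 < dist P Q + dist P R + dist Q R := by positivity
  field_simp
  ring


/-! ## Part B : a line and a triangle -/

lemma Lab.flip {t : Tri} {P Q R : Pt} (h : Lab t P Q R) : Lab t P R Q := by
  unfold Lab at *; tauto

def cx (d P : Pt) : ℝ := d 0 * P 0 + d 1 * P 1
def cy (d P : Pt) : ℝ := d 0 * P 1 - d 1 * P 0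
def ln (d : Pt) (τ s : ℝ) : Pt := !₂[s * d 0 - τ * d 1, s * d 1 + τ * d 0]
def UnitV (d : Pt) : Prop := d 0 ^ 2 + d 1 ^ 2 = 1

lemma ln_zero (d : Pt) (τ s : ℝ) : (ln d τ s) 0 = s * d 0 - τ * d 1 := by simp [ln]
lemma ln_one (d : Pt) (τ s : ℝ) : (ln d τ s) 1 = s * d 1 + τ * d 0 := by simp [ln]

lemma cx_ln {d : Pt} (hd : UnitV d) (τ s : ℝ) : cx d (ln d τ s) = s := by
  unfold cx; rw [ln_zero, ln_one]; unfold UnitV at hd; linear_combination s * hd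

lemma cy_ln {d : Pt} (hd : UnitV d) (τ s : ℝ) : cy d (ln d τ s) = τ := by
  unfold cy; rw [ln_zero, ln_one]; unfold UnitV at hd; linear_combination τ * hd

lemma ln_cx_cy {d : Pt} (hd : UnitV d) (P : Pt) : ln d (cy d P) (cx d P) = P := by
  unfold UnitV at hd
  ext i; fin_cases i
  · show (ln d (cy d P) (cx d P)) 0 = P 0
    rw [ln_zero]; unfold cx cy; linear_combination P 0 * hd
  · show (ln d (cy d P) (cx d P)) 1 = P 1
    rw [ln_one]; unfold cx cy; linear_combination P 1 * hd

lemma orient_c {d : Pt} (hd : UnitV d) (P Q x : Pt) :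
    orient P Q x = (cx d Q - cx d P) * (cy d x - cy d P) - (cy d Q - cy d P) * (cx d x - cx d P) := by
  unfold UnitV at hd
  unfold orient cx cy
  linear_combination -((Q 0 - P 0) * (x 1 - P 1) - (Q 1 - P 1) * (x 0 - P 0)) * hd

lemma dist_sq_c {d : Pt} (hd : UnitV d) (P Q : Pt) :
    dist P Q ^ 2 = (cx d Q - cx d P) ^ 2 + (cy d Q - cy d P) ^ 2 := by
  unfold UnitV at hd
  rw [EuclideanSpace.dist_eq, Real.sq_sqrt (by positivity)]
  simp only [Fin.sum_univ_two, Real.dist_eq, sq_abs]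
  unfold cx cy
  linear_combination -((P 0 - Q 0)^2 + (P 1 - Q 1)^2) * hd

def th (d : Pt) (τ : ℝ) (e : Pt × Pt) : ℝ := (τ - cy d e.1) / (cy d e.2 - cy d e.1)
def Xc (d : Pt) (τ : ℝ) (e : Pt × Pt) : ℝ := cx d e.1 + th d τ e * (cx d e.2 - cx d e.1)
def Crs (d : Pt) (τ : ℝ) (e : Pt × Pt) : Prop := (cy d e.1 - τ) * (cy d e.2 - τ) < 0

lemma Crs.ne {d : Pt} {τ : ℝ} {e : Pt × Pt} (h : Crs d τ e) : cy d e.2 - cy d e.1 ≠ 0 := by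
  intro h0
  unfold Crs at h
  rw [show cy d e.2 = cy d e.1 by linarith] at h
  nlinarith [mul_self_nonneg (cy d e.1 - τ)]

lemma Crs_swap (d : Pt) (τ : ℝ) (P Q : Pt) : Crs d τ (P, Q) ↔ Crs d τ (Q, P) := by
  unfold Crs; simp only; rw [mul_comm]

lemma Xc_swap {d : Pt} {τ : ℝ} {P Q : Pt} (h : Crs d τ (P, Q)) : Xc d τ (P, Q) = Xc d τ (Q, P) := by
  have h1 := h.ne
  have h2 := ((Crs_swap d τ P Q).mp h).ne
  unfold Xc th
  simp only at *
  field_simp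
  ring

lemma th_mem {d : Pt} {τ : ℝ} {e : Pt × Pt} (h : Crs d τ e) : th d τ e ∈ Ioo (0:ℝ) 1 := by
  have h1 := h.ne
  unfold th
  unfold Crs at h
  rcases lt_or_gt_of_ne h1 with h2 | h2
  · have : cy d e.2 < τ ∧ τ < cy d e.1 := by constructor <;> nlinarith
    constructor
    · exact div_pos_of_neg_of_neg (by linarith) h2
    · rw [div_lt_one_of_neg h2]; linarith
  · have : cy d e.1 < τ ∧ τ < cy d e.2 := by constructor <;> nlinarith
    constructor
    · exact div_pos (by linarith) h2
    · rw [div_lt_one h2]; linarith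

lemma ln_Xc {d : Pt} (hd : UnitV d) {τ : ℝ} {e : Pt × Pt} (h : Crs d τ e) :
    ln d τ (Xc d τ e) = e.1 + th d τ e • (e.2 - e.1) := by
  have h1 := h.ne
  set p := e.1 + th d τ e • (e.2 - e.1) with hp
  have e1 : cx d p = Xc d τ e := by
    rw [hp]; unfold Xc cx; simp; ring
  have e2 : cy d p = τ := by
    have : cy d p = cy d e.1 + th d τ e * (cy d e.2 - cy d e.1) := by
      rw [hp]; unfold cy; simp; ring
    rw [this]; unfold th; field_simp; ring
  rw [← e1]
  conv_lhs => rw [← e2]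
  exact ln_cx_cy hd p

lemma orient_ln {d : Pt} (hd : UnitV d) {τ : ℝ} {P Q : Pt} (h : Crs d τ (P, Q)) (s : ℝ) :
    orient P Q (ln d τ s) = (cy d Q - cy d P) * (Xc d τ (P, Q) - s) := by
  have h1 := h.ne
  rw [orient_c hd, cx_ln hd, cy_ln hd]
  unfold Xc th
  simp only at *
  field_simp
  ring

lemma bary_line {d : Pt} (hd : UnitV d) (τ s : ℝ) (P Q R : Pt) :
    orient Q R (ln d τ s) * (cy d P - τ) + orient R P (ln d τ s) * (cy d Q - τ)
      + orient P Q (ln d τ s) * (cy d R - τ) = 0 := by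
  rw [orient_c hd, orient_c hd, orient_c hd, cx_ln hd, cy_ln hd]; ring

/-- Data of a triangle crossed by a line: enters through `PQ`, exits through `PR`. -/
structure TriX (d : Pt) (τ : ℝ) (t : Tri) (P Q R : Pt) : Prop where
  lab : Lab t P Q R
  c1 : Crs d τ (P, Q)
  c2 : Crs d τ (P, R)
  c3 : ¬ Crs d τ (Q, R)
  lt : Xc d τ (P, Q) < Xc d τ (P, R)
  sin : Sd t P Q * (cy d Q - cy d P) < 0
  sout : 0 < Sd t P R * (cy d R - cy d P)
  chord : Xc d τ (P, R) - Xc d τ (P, Q) =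
    (cy d P - τ) * orient P Q R / ((cy d Q - cy d P) * (cy d R - cy d P))
  mo : ∀ s, ln d τ s ∈ t.openHull ↔ s ∈ Ioo (Xc d τ (P, Q)) (Xc d τ (P, R))
  mc : ∀ s, ln d τ s ∈ t.closedHull ↔ s ∈ Icc (Xc d τ (P, Q)) (Xc d τ (P, R))

lemma triX_aux {d : Pt} (hd : UnitV d) {τ : ℝ} {t : Tri} (ht : t.Nondeg) {P Q R : Pt}
    (h : Lab t P Q R) (c1 : Crs d τ (P, Q)) (c2 : Crs d τ (P, R))
    (hs : orient P Q R * (cy d Q - cy d P) < 0) : TriX d τ t P Q R := by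
  have hc := h.orient_ne ht
  have n1 : cy d Q - cy d P ≠ 0 := c1.ne
  have n2 : cy d R - cy d P ≠ 0 := c2.ne
  have hR : Lab t P R Q := h.flip
  have hSR : Sd t P R = - orient P Q R := by
    rw [hR.Sd_eq]; unfold orient; ring
  have k1 := c1
  have k2 := c2
  unfold Crs at k1 k2
  simp only at k1 k2
  have hp0 : cy d P - τ ≠ 0 := by intro h0; rw [h0] at k1; simp at k1
  have hpp : 0 < (cy d P - τ) * (cy d P - τ) := mul_self_pos.mpr hp0
  have hqr : 0 < (cy d Q - τ) * (cy d R - τ) := by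
    by_contra hcon
    push Not at hcon
    nlinarith [mul_pos_of_neg_of_neg k1 k2, mul_nonneg hpp.le (neg_nonneg.mpr hcon)]
  have g1 : (cy d P - τ) * (cy d Q - cy d P) < 0 := by nlinarith
  have g2 : (cy d P - τ) * (cy d R - cy d P) < 0 := by nlinarith
  have g12 : 0 < (cy d Q - cy d P) * (cy d R - cy d P) := by
    by_contra hcon
    push Not at hcon
    nlinarith [mul_pos_of_neg_of_neg g1 g2, mul_nonneg hpp.le (neg_nonneg.mpr hcon)]
  have gpc : 0 < (cy d P - τ) * orient P Q R := by
    by_contra hcon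
    push Not at hcon
    have : 0 < (cy d Q - cy d P) * (cy d Q - cy d P) := mul_self_pos.mpr n1
    nlinarith [mul_pos_of_neg_of_neg g1 hs, mul_nonneg this.le (neg_nonneg.mpr hcon)]
  have sR : orient P Q R * (cy d R - cy d P) < 0 := by
    by_contra hcon
    push Not at hcon
    have : 0 < (cy d Q - cy d P) * (cy d Q - cy d P) := mul_self_pos.mpr n1
    nlinarith [mul_neg_of_neg_of_pos hs g12, mul_nonneg hcon this.le]
  have hchord : Xc d τ (P, R) - Xc d τ (P, Q) =
    (cy d P - τ) * orient P Q R / ((cy d Q - cy d P) * (cy d R - cy d P)) := by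
    rw [orient_c hd P Q R]
    unfold Xc th
    simp only
    field_simp
    ring
  have hlt : Xc d τ (P, Q) < Xc d τ (P, R) := by
    have : 0 < Xc d τ (P, R) - Xc d τ (P, Q) := by rw [hchord]; exact div_pos gpc g12
    linarith
  have o1 : ∀ s, orient P Q (ln d τ s) * orient P Q R =
      (-(orient P Q R * (cy d Q - cy d P))) * (s - Xc d τ (P, Q)) := by
    intro s; rw [orient_ln hd c1]; ring
  have o2 : ∀ s, orient R P (ln d τ s) * orient P Q R =
      (-(orient P Q R * (cy d R - cy d P))) * (Xc d τ (P, R) - s) := by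
    intro s; rw [orient_swap P R, orient_ln hd c2]; ring
  have o3 : ∀ s, (orient Q R (ln d τ s) * orient P Q R) * ((cy d P - τ) * (cy d P - τ)) =
      (orient R P (ln d τ s) * orient P Q R) * (-((cy d P - τ) * (cy d Q - τ))) +
      (orient P Q (ln d τ s) * orient P Q R) * (-((cy d P - τ) * (cy d R - τ))) := by
    intro s
    linear_combination (orient P Q R * (cy d P - τ)) * bary_line hd τ s P Q R
  refine ⟨h, c1, c2, ?_, hlt, ?_, ?_, hchord, ?_, ?_⟩
  · unfold Crs; simp only; linarith
  · rw [h.Sd_eq]; exact hs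
  · rw [hSR]; linarith
  · intro s
    rw [h.mem_open ht]
    constructor
    · rintro ⟨a, _, c⟩
      rw [o1] at a; rw [o2] at c
      have := pos_of_mul_pos_right a (by linarith)
      have := pos_of_mul_pos_right c (by linarith)
      exact ⟨by linarith, by linarith⟩
    · rintro ⟨a, b⟩
      have a' : 0 < orient P Q (ln d τ s) * orient P Q R := by
        rw [o1]; exact mul_pos (by linarith) (by linarith)
      have b' : 0 < orient R P (ln d τ s) * orient P Q R := by
        rw [o2]; exact mul_pos (by linarith) (by linarith)
      refine ⟨a', ?_, b'⟩
      have := o3 s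
      refine pos_of_mul_pos_left (b := ((cy d P - τ) * (cy d P - τ))) ?_ hpp.le
      rw [o3]
      exact add_pos (mul_pos b' (by linarith)) (mul_pos a' (by linarith))
  · intro s
    rw [h.mem_closed ht]
    constructor
    · rintro ⟨a, _, c⟩
      rw [o1] at a; rw [o2] at c
      have := nonneg_of_mul_nonneg_right a (by linarith)
      have := nonneg_of_mul_nonneg_right c (by linarith)
      exact ⟨by linarith, by linarith⟩
    · rintro ⟨a, b⟩
      have a' : 0 ≤ orient P Q (ln d τ s) * orient P Q R := by
        rw [o1]; exact mul_nonneg (by linarith) (by linarith)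
      have b' : 0 ≤ orient R P (ln d τ s) * orient P Q R := by
        rw [o2]; exact mul_nonneg (by linarith) (by linarith)
      refine ⟨a', ?_, b'⟩
      refine nonneg_of_mul_nonneg_left (b := ((cy d P - τ) * (cy d P - τ))) ?_ hpp
      rw [o3]
      exact add_nonneg (mul_nonneg b' (by linarith)) (mul_nonneg a' (by linarith))

lemma no_sol (x y z p q r : ℝ) (hx : 0 ≤ x) (hy : 0 ≤ y) (hz : 0 ≤ z) (h : 0 < x + y + z)
    (hp : 0 < p) (hq : 0 < q) (hr : 0 < r) : 0 < y * p + z * q + x * r := by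
  rcases (show 0 < x ∨ 0 < y ∨ 0 < z by
        by_contra hcon; push Not at hcon; linarith [hcon.1, hcon.2.1, hcon.2.2]) with h | h | h
  · have := mul_pos h hr
    positivity
  · have := mul_pos h hp
    positivity
  · have := mul_pos h hq
    positivity

def GenT (d : Pt) (τ : ℝ) (t : Tri) : Prop := cy d t.A ≠ τ ∧ cy d t.B ≠ τ ∧ cy d t.C ≠ τ

lemma line_tri {d : Pt} (hd : UnitV d) {τ : ℝ} {t : Tri} (ht : t.Nondeg) (hg : GenT d τ t) :
    ((∀ s, ln d τ s ∉ t.closedHull) ∧ ∀ e ∈ t.edgeList, ¬ Crs d τ e) ∨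
      ∃ P Q R, TriX d τ t P Q R := by
  have apex : ∀ P Q R, Lab t P Q R → Crs d τ (P, Q) → Crs d τ (P, R) → ∃ P Q R, TriX d τ t P Q R := by
    intro P Q R h c1 c2
    have hc := h.orient_ne ht
    have n1 : cy d Q - cy d P ≠ 0 := c1.ne
    rcases lt_or_gt_of_ne (mul_ne_zero hc n1) with hs | hs
    · exact ⟨P, Q, R, triX_aux hd ht h c1 c2 hs⟩
    · refine ⟨P, R, Q, triX_aux hd ht h.flip c2 c1 ?_⟩
      have e : orient P R Q = - orient P Q R := by unfold orient; ring
      rw [e]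
      have n2 : cy d R - cy d P ≠ 0 := c2.ne
      unfold Crs at c1 c2
      simp only at c1 c2
      have hp0 : cy d P - τ ≠ 0 := by intro h0; rw [h0] at c1; simp at c1
      have hpp : 0 < (cy d P - τ) * (cy d P - τ) := mul_self_pos.mpr hp0
      have g1 : (cy d P - τ) * (cy d Q - cy d P) < 0 := by nlinarith
      have g2 : (cy d P - τ) * (cy d R - cy d P) < 0 := by nlinarith
      have g12 : 0 < (cy d Q - cy d P) * (cy d R - cy d P) := by
        by_contra hcon
        push Not at hcon
        nlinarith [mul_pos_of_neg_of_neg g1 g2, mul_nonneg hpp.le (neg_nonneg.mpr hcon)]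
      by_contra hcon
      push Not at hcon
      have : 0 < (cy d Q - cy d P) * (cy d Q - cy d P) := mul_self_pos.mpr n1
      nlinarith [mul_pos hs g12, mul_nonneg hcon this.le]
  obtain ⟨gA, gB, gC⟩ := hg
  have lABC : Lab t t.A t.B t.C := by simp [Lab]
  rcases lt_or_gt_of_ne gA with hA | hA <;> rcases lt_or_gt_of_ne gB with hB | hB <;>
    rcases lt_or_gt_of_ne gC with hC | hC
  rotate_left
  · exact Or.inr (apex t.C t.A t.B lABC.rot.rot (by unfold Crs; simp only; nlinarith) (by unfold Crs; simp only; nlinarith))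
  · exact Or.inr (apex t.B t.C t.A lABC.rot (by unfold Crs; simp only; nlinarith) (by unfold Crs; simp only; nlinarith))
  · exact Or.inr (apex t.A t.B t.C lABC (by unfold Crs; simp only; nlinarith) (by unfold Crs; simp only; nlinarith))
  · exact Or.inr (apex t.A t.B t.C lABC (by unfold Crs; simp only; nlinarith) (by unfold Crs; simp only; nlinarith))
  · exact Or.inr (apex t.B t.C t.A lABC.rot (by unfold Crs; simp only; nlinarith) (by unfold Crs; simp only; nlinarith))
  · exact Or.inr (apex t.C t.A t.B lABC.rot.rot (by unfold Crs; simp only; nlinarith) (by unfold Crs; simp only; nlinarith))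
  all_goals
    left
    constructor
    · intro s hs
      obtain ⟨a, b, c⟩ := (lABC.mem_closed ht _).mp hs
      have hbar := bary_line hd τ s t.A t.B t.C
      have hsum := orient_sum t.A t.B t.C (ln d τ s)
      have hcc := mul_self_pos.mpr (lABC.orient_ne ht)
      set cc := orient t.A t.B t.C
      have hsum' : orient t.A t.B (ln d τ s) * cc + orient t.B t.C (ln d τ s) * cc +
        orient t.C t.A (ln d τ s) * cc = cc * cc := by linear_combination cc * hsum
      have hbar' : orient t.B t.C (ln d τ s) * cc * (cy d t.A - τ) + orient t.C t.A (ln d τ s) * cc * (cy d t.B - τ)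
        + orient t.A t.B (ln d τ s) * cc * (cy d t.C - τ) = 0 := by linear_combination cc * hbar
      generalize orient t.A t.B (ln d τ s) * cc = x at *
      generalize orient t.B t.C (ln d τ s) * cc = y at *
      generalize orient t.C t.A (ln d τ s) * cc = z at *
      first
      | nlinarith [no_sol x y z (cy d t.A - τ) (cy d t.B - τ) (cy d t.C - τ) a b c (by linarith) (by linarith) (by linarith) (by linarith)]
      | nlinarith [no_sol x y z (-(cy d t.A - τ)) (-(cy d t.B - τ)) (-(cy d t.C - τ)) a b c (by linarith) (by linarith) (by linarith) (by linarith)]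
    · intro e he
      simp only [Tri.edgeList, List.mem_cons, List.not_mem_nil, or_false] at he
      rcases he with rfl | rfl | rfl <;> unfold Crs <;> simp only <;> nlinarith


/-! ## Part C : the potential -/

def Pot (d : Pt) (τ Λ : ℝ) (e : Pt × Pt) : ℝ :=
  if |cy d e.1 - τ| < |cy d e.2 - τ| then
    dist e.1 e.2 * Real.exp (-(Λ * ((cx d e.2 - cx d e.1) / dist e.1 e.2)))
  else if |cy d e.2 - τ| < |cy d e.1 - τ| then
    dist e.1 e.2 * Real.exp (-(Λ * ((cx d e.1 - cx d e.2) / dist e.1 e.2)))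
  else 0

lemma Pot_swap (d : Pt) (τ Λ : ℝ) (P Q : Pt) : Pot d τ Λ (P, Q) = Pot d τ Λ (Q, P) := by
  unfold Pot
  simp only
  rw [dist_comm Q P]
  by_cases h1 : |cy d P - τ| < |cy d Q - τ|
  · rw [if_pos h1, if_neg (not_lt.mpr h1.le), if_pos h1]
  · by_cases h2 : |cy d Q - τ| < |cy d P - τ|
    · rw [if_neg h1, if_pos h2, if_pos h2]
    · rw [if_neg h1, if_neg h2, if_neg h2, if_neg h1]

lemma Pot_nonneg (d : Pt) (τ Λ : ℝ) (e : Pt × Pt) : 0 ≤ Pot d τ Λ e := by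
  unfold Pot
  split_ifs <;> positivity

lemma abs_cx_le {d : Pt} (hd : UnitV d) (P Q : Pt) : |cx d Q - cx d P| ≤ dist P Q := by
  apply abs_le_of_sq_le_sq _ dist_nonneg
  rw [dist_sq_c hd]; nlinarith [sq_nonneg (cy d Q - cy d P)]

lemma abs_cy_le {d : Pt} (hd : UnitV d) (P Q : Pt) : |cy d Q - cy d P| ≤ dist P Q := by
  apply abs_le_of_sq_le_sq _ dist_nonneg
  rw [dist_sq_c hd]; nlinarith [sq_nonneg (cx d Q - cx d P)]

lemma ratio_ge {d : Pt} (hd : UnitV d) (P Q : Pt) : |(cx d Q - cx d P) / dist P Q| ≤ 1 := by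
  rw [abs_div, abs_of_nonneg (dist_nonneg (x := P) (y := Q))]
  exact div_le_one_of_le₀ (abs_cx_le hd P Q) dist_nonneg

lemma Pot_le {d : Pt} (hd : UnitV d) (τ : ℝ) {Λ : ℝ} (hΛ : 0 ≤ Λ) (e : Pt × Pt) :
    Pot d τ Λ e ≤ Real.exp Λ * dist e.1 e.2 := by
  have hr := abs_le.mp (ratio_ge hd e.1 e.2)
  have hr' := abs_le.mp (ratio_ge hd e.2 e.1)
  rw [dist_comm e.2 e.1] at hr'
  unfold Pot
  split_ifs
  · rw [mul_comm]
    gcongr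
    nlinarith
  · rw [mul_comm]
    gcongr
    nlinarith
  · positivity

lemma unit_rot (a1 a2 b1 b2 m : ℝ) (ha : a1 ^ 2 + a2 ^ 2 = 1) (hb : b1 ^ 2 + b2 ^ 2 = 1) (hm : 0 < m)
    (hs : 0 < a2 * b2) (hc : (a1 * b2 - a2 * b1) * a2 < 0) (hcm : m ≤ |a1 * b2 - a2 * b1|) :
    m ^ 2 / 2 ≤ b1 - a1 := by
  have id : (b1 - a1) * (1 + (a1 * b1 + a2 * b2)) = (-(a1 * b2 - a2 * b1)) * (a2 + b2) := by
    linear_combination (-b1) * ha + a1 * hb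
  set c := a1 * b2 - a2 * b1 with hcd
  have h1 : -c * (a2 + b2) = |c| * (|a2| + |b2|) := by
    rcases lt_or_gt_of_ne (show a2 ≠ 0 by rintro h; rw [h] at hs; simp at hs) with h | h
    · have hb2 : b2 < 0 := by nlinarith
      have hc0 : 0 < c := by nlinarith
      rw [abs_of_neg h, abs_of_neg hb2, abs_of_pos hc0]; ring
    · have hb2 : 0 < b2 := by nlinarith
      have hc0 : c < 0 := by nlinarith
      rw [abs_of_pos h, abs_of_pos hb2, abs_of_neg hc0]
  have ha1 : |a1| ≤ 1 := by apply abs_le_of_sq_le_sq _ (by norm_num); nlinarith [sq_nonneg a2]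
  have hb1 : |b1| ≤ 1 := by apply abs_le_of_sq_le_sq _ (by norm_num); nlinarith [sq_nonneg b2]
  have h2 : |c| ≤ |a2| + |b2| := by
    rw [hcd]
    calc |a1 * b2 - a2 * b1| ≤ |a1 * b2| + |a2 * b1| := abs_sub _ _
      _ = |a1| * |b2| + |a2| * |b1| := by rw [abs_mul, abs_mul]
      _ ≤ 1 * |b2| + |a2| * 1 := by gcongr
      _ = _ := by ring
  have h3 : m ^ 2 ≤ (b1 - a1) * (1 + (a1 * b1 + a2 * b2)) := by
    rw [id, h1]
    calc m ^ 2 = m * m := sq m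
      _ ≤ |c| * (|a2| + |b2|) := by gcongr; linarith
  have h4 : 0 ≤ 1 + (a1 * b1 + a2 * b2) := by nlinarith [sq_nonneg (a1 + b1), sq_nonneg (a2 + b2)]
  have h5 : 1 + (a1 * b1 + a2 * b2) ≤ 2 := by nlinarith [sq_nonneg (a1 - b1), sq_nonneg (a2 - b2)]
  have h6 : 0 < b1 - a1 := by
    by_contra hcon
    push Not at hcon
    nlinarith [mul_nonneg (neg_nonneg.mpr hcon) h4, sq_pos_of_pos hm]
  nlinarith

/-- the constants -/
def kap (K : ℝ) : ℝ := 2 * |K| + 2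
def Lam (K : ℝ) : ℝ := 4 * kap K ^ 3
def cZ (K : ℝ) : ℝ := 2 * Real.exp (Lam K)
def cO (K : ℝ) : ℝ := 2 * kap K ^ 2 * (1 + cZ K * (Real.exp (Lam K) * kap K))

lemma kap_ge (K : ℝ) : 2 ≤ kap K := by unfold kap; linarith [abs_nonneg K]
lemma Lam_nonneg (K : ℝ) : 0 ≤ Lam K := by have := kap_ge K; unfold Lam; positivity
lemma cZ_nonneg (K : ℝ) : 0 ≤ cZ K := by unfold cZ; positivity
lemma cO_nonneg (K : ℝ) : 0 ≤ cO K := by have := kap_ge K; have := cZ_nonneg K; unfold cO; positivity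

set_option maxHeartbeats 2000000 in
lemma potential_step {d : Pt} (hd : UnitV d) {τ K : ℝ} {t : Tri} (ht : t.Nondeg)
    (hK : t.shapeReg ≤ K) {P Q R : Pt} (h : TriX d τ t P Q R) :
    dist P Q ≤ cO K * (Xc d τ (P, R) - Xc d τ (P, Q)) +
      cZ K * (Pot d τ (Lam K) (P, Q) - Pot d τ (Lam K) (P, R)) := by
  have hk2 := kap_ge K
  obtain ⟨r1, r2⟩ := shape_bounds ht hK h.lab
  have r3 := (shape_bounds ht hK h.lab.flip).1
  change _ ≤ kap K * _ at r1
  change _ ≤ kap K * _ at r2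
  change _ ≤ kap K * _ at r3
  have ha : 0 < dist P Q := dist_pos.mpr (h.lab.ne ht)
  have hb : 0 < dist P R := dist_pos.mpr (h.lab.flip.ne ht)
  have a2 := dist_sq_c hd P Q
  have b2 := dist_sq_c hd P R
  have hch := h.chord
  have hor := orient_c hd P Q R
  have hk1 := h.c1
  have hk2' := h.c2
  have n1 : cy d Q - cy d P ≠ 0 := h.c1.ne
  have n2 : cy d R - cy d P ≠ 0 := h.c2.ne
  have hsin := h.sin
  rw [h.lab.Sd_eq] at hsin
  have hlt := h.lt
  unfold Crs at hk1 hk2'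
  simp only at hk1 hk2'
  have hq2 := abs_cy_le hd P Q
  have hr2 := abs_cy_le hd P R
  set κ := kap K with hκ
  set p := cy d P - τ with hp
  set q2 := cy d Q - cy d P with hq2d
  set s2 := cy d R - cy d P with hs2d
  set c := orient P Q R with hc
  have hp0 : p ≠ 0 := by intro h0; rw [h0] at hk1; simp at hk1
  have hpp : 0 < p * p := mul_self_pos.mpr hp0
  have eQ : cy d Q - τ = p + q2 := by rw [hp, hq2d]; ring
  have eR : cy d R - τ = p + s2 := by rw [hp, hs2d]; ring
  rw [eQ] at hk1
  rw [eR] at hk2'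
  have g1 : p * q2 < 0 := by nlinarith
  have g2 : p * s2 < 0 := by nlinarith
  have g12 : 0 < q2 * s2 := by
    by_contra hcon
    push Not at hcon
    nlinarith [mul_pos_of_neg_of_neg g1 g2, mul_nonneg hpp.le (neg_nonneg.mpr hcon)]
  have hca : Xc d τ (P, R) - Xc d τ (P, Q) = |p| * |c| / (|q2| * |s2|) := by
    rw [← abs_of_pos (sub_pos.mpr hlt), hch, abs_div, abs_mul, abs_mul]
  set ch := Xc d τ (P, R) - Xc d τ (P, Q) with hchd
  have hchpos : 0 < ch := sub_pos.mpr hlt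
  have q2p : 0 < |q2| := abs_pos.mpr n1
  have s2p : 0 < |s2| := abs_pos.mpr n2
  have pp : 0 < |p| := abs_pos.mpr hp0
  rw [eq_div_iff (by positivity)] at hca
  set a := dist P Q
  set b := dist P R
  have caseA : a ≤ 2 * κ ^ 2 * ch → a ≤ cO K * ch +
      cZ K * (Pot d τ (Lam K) (P, Q) - Pot d τ (Lam K) (P, R)) := by
    intro hA
    have h1 := Pot_nonneg d τ (Lam K) (P, Q)
    have h2 : Pot d τ (Lam K) (P, R) ≤ Real.exp (Lam K) * b := Pot_le hd τ (Lam_nonneg K) (P, R)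
    have h3 : Pot d τ (Lam K) (P, R) ≤ Real.exp (Lam K) * κ * a := by
      calc _ ≤ _ := h2
        _ ≤ Real.exp (Lam K) * (κ * a) := by gcongr
        _ = _ := by ring
    have hz := cZ_nonneg K
    have h4 : cZ K * Pot d τ (Lam K) (P, R) ≤ cZ K * (Real.exp (Lam K) * κ * a) := by gcongr
    have h5 : 0 ≤ cZ K * Pot d τ (Lam K) (P, Q) := by positivity
    have h6 : (1 + cZ K * (Real.exp (Lam K) * κ)) * a ≤
      (1 + cZ K * (Real.exp (Lam K) * κ)) * (2 * κ ^ 2 * ch) := by gcongr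
    have h7 : cO K * ch = (1 + cZ K * (Real.exp (Lam K) * κ)) * (2 * κ ^ 2 * ch) := by
      unfold cO; rw [← hκ]; ring
    rw [h7]
    linarith
  by_cases hA1 : |q2| ≤ 2 * |p|
  · apply caseA
    -- ch * |q2| * |s2| = |p||c| ≥ |q2|/2 * a b / κ
    have h1 : a * b * |q2| ≤ κ * |c| * (2 * |p|) := by gcongr
    have h2 : a * b * |q2| ≤ 2 * κ * ch * |q2| * b := by
      calc _ ≤ _ := h1
        _ = 2 * κ * (|p| * |c|) := by ring
        _ = 2 * κ * ch * |q2| * |s2| := by rw [← hca]; ring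
        _ ≤ _ := by gcongr
    have h3 : a ≤ 2 * κ * ch := by
      have : a * (b * |q2|) ≤ 2 * κ * ch * (b * |q2|) := by linarith
      exact le_of_mul_le_mul_right this (by positivity)
    calc a ≤ 2 * κ * ch := h3
      _ = 2 * κ * 1 * ch := by ring
      _ ≤ 2 * κ * κ * ch := by gcongr; exact kap_ge K |>.trans' (by norm_num)
      _ = 2 * κ ^ 2 * ch := by ring
  push Not at hA1
  by_cases hA2 : |s2| ≤ 2 * |p|
  · apply caseA
    have h1 : a * b * |s2| ≤ κ * |c| * (2 * |p|) := by gcongr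
    have h2 : a * b * |s2| ≤ 2 * κ * ch * |s2| * a := by
      calc _ ≤ _ := h1
        _ = 2 * κ * (|p| * |c|) := by ring
        _ = 2 * κ * ch * |s2| * |q2| := by rw [← hca]; ring
        _ ≤ _ := by gcongr
    have h3 : b ≤ 2 * κ * ch := by
      have : b * (a * |s2|) ≤ 2 * κ * ch * (a * |s2|) := by linarith
      exact le_of_mul_le_mul_right this (by positivity)
    calc a ≤ κ * b := r3
      _ ≤ κ * (2 * κ * ch) := by gcongr
      _ = _ := by ring
  push Not at hA2
  -- case B
  have far : ∀ z : ℝ, 2 * |p| < |z| → |p| < |p + z| := by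
    intro z hz
    have := abs_sub_abs_le_abs_sub z (-p)
    rw [abs_neg, sub_neg_eq_add, add_comm z p] at this
    linarith
  have hPQ : Pot d τ (Lam K) (P, Q) = a * Real.exp (-(Lam K * ((cx d Q - cx d P) / a))) := by
    unfold Pot; simp only
    rw [if_pos (by rw [eQ]; exact far q2 hA1)]
  have hPR : Pot d τ (Lam K) (P, R) = b * Real.exp (-(Lam K * ((cx d R - cx d P) / b))) := by
    unfold Pot; simp only
    rw [if_pos (by rw [eR]; exact far s2 hA2)]
  have hrot := unit_rot ((cx d Q - cx d P) / a) (q2 / a) ((cx d R - cx d P) / b) (s2 / b) (1 / κ)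
    (by rw [div_pow, div_pow, ← add_div, ← a2, div_self (by positivity)])
    (by rw [div_pow, div_pow, ← add_div, ← b2, div_self (by positivity)]) (by positivity)
    (by rw [div_mul_div_comm]; positivity)
    (by
      have : ((cx d Q - cx d P) / a * (s2 / b) - q2 / a * ((cx d R - cx d P) / b)) * (q2 / a) =
        (c * q2) / (a * a * b) := by
        rw [hor]; field_simp
      rw [this]
      exact div_neg_of_neg_of_pos hsin (by positivity))
    (by
      have : ((cx d Q - cx d P) / a * (s2 / b) - q2 / a * ((cx d R - cx d P) / b)) =
        c / (a * b) := by
        rw [hor]; field_simp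
      rw [this, abs_div, abs_of_pos (show 0 < a * b by positivity), div_le_div_iff₀ (by positivity) (by positivity)]
      linarith)
  set x := (cx d Q - cx d P) / a
  set y := (cx d R - cx d P) / b
  have hLd : 2 * κ ≤ Lam K * (y - x) := by
    have : Lam K * ((1 / κ) ^ 2 / 2) = 2 * κ := by unfold Lam; rw [← hκ]; field_simp; ring
    rw [← this]
    exact mul_le_mul_of_nonneg_left hrot (Lam_nonneg K)
  have hexp : 2 * κ * Real.exp (-(Lam K * y)) ≤ Real.exp (-(Lam K * x)) := by
    have h1 : 2 * κ ≤ Real.exp (Lam K * (y - x)) :=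
      hLd.trans (by linarith [Real.add_one_le_exp (Lam K * (y - x))])
    calc _ ≤ Real.exp (Lam K * (y - x)) * Real.exp (-(Lam K * y)) := by gcongr
      _ = _ := by rw [← Real.exp_add]; congr 1; ring
  have hxle : x ≤ 1 := (abs_le.mp (ratio_ge hd P Q)).2
  have hlow : Real.exp (-(Lam K)) ≤ Real.exp (-(Lam K * x)) := by
    apply Real.exp_le_exp.mpr
    have := mul_le_mul_of_nonneg_left hxle (Lam_nonneg K)
    linarith
  have hPR2 : 2 * (b * Real.exp (-(Lam K * y))) ≤ a * Real.exp (-(Lam K * x)) := by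
    calc 2 * (b * Real.exp (-(Lam K * y))) ≤ 2 * ((κ * a) * Real.exp (-(Lam K * y))) := by gcongr
      _ = a * (2 * κ * Real.exp (-(Lam K * y))) := by ring
      _ ≤ _ := by gcongr
  rw [hPQ, hPR]
  have hfin : a ≤ cZ K * (a * Real.exp (-(Lam K * x)) / 2) := by
    calc a = Real.exp (Lam K) * Real.exp (-(Lam K)) * a := by rw [← Real.exp_add]; simp
      _ ≤ Real.exp (Lam K) * Real.exp (-(Lam K * x)) * a := by gcongr
      _ = _ := by unfold cZ; ring
  have h8 : cZ K * (a * Real.exp (-(Lam K * x)) / 2) ≤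
     cZ K * (a * Real.exp (-(Lam K * x)) - b * Real.exp (-(Lam K * y))) := by
    apply mul_le_mul_of_nonneg_left _ (cZ_nonneg K)
    linarith
  have := mul_nonneg (cO_nonneg K) hchpos.le
  linarith


/-- the triangle has the edge `e` (up to orientation). -/
def sh (t' : Tri) (e : Pt × Pt) : Prop := ∃ e' ∈ t'.edgeList, SameEdge e e'

lemma SameEdge.symm {e e' : Pt × Pt} (h : SameEdge e e') : SameEdge e' e := by
  rcases h with rfl | rfl
  · left; rfl
  · right; rfl

lemma sameEdge_comm (e e' : Pt × Pt) : SameEdge e e' ↔ SameEdge e' e :=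
  ⟨SameEdge.symm, SameEdge.symm⟩

lemma SameEdge.trans {e e' e'' : Pt × Pt} (h : SameEdge e e') (h' : SameEdge e' e'') :
    SameEdge e e'' := by
  rcases h with rfl | rfl <;> rcases h' with rfl | rfl
  · left; rfl
  · right; rfl
  · right; rfl
  · left; rfl

lemma sh_lab {t : Tri} {e : Pt × Pt} (h : sh t e) : ∃ R, Lab t e.1 e.2 R := by
  obtain ⟨e', he', hs⟩ := h
  obtain ⟨R, hR⟩ := edge_lab he'
  rcases hs with rfl | rfl
  · exact ⟨R, hR⟩
  · exact ⟨R, hR.swap⟩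

lemma sh_self {t : Tri} {e : Pt × Pt} (h : e ∈ t.edgeList) : sh t e := ⟨e, h, Or.inl rfl⟩

lemma nondeg_ne {t : Tri} (ht : t.Nondeg) : t.A ≠ t.B ∧ t.B ≠ t.C ∧ t.C ≠ t.A := by
  have h : Lab t t.A t.B t.C := by simp [Lab]
  exact ⟨h.ne ht, h.rot.ne ht, h.rot.rot.ne ht⟩

lemma es_add (t : Tri) (F G : Pt × Pt → ℝ) : es t (fun e => F e + G e) = es t F + es t G := by
  simp only [es_eq]; ring

lemma es_mul (t : Tri) (c : ℝ) (F : Pt × Pt → ℝ) : es t (fun e => c * F e) = c * es t F := by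
  simp only [es_eq]; ring

lemma es_sum {ι : Type*} (s : Finset ι) (t : Tri) (F : ι → Pt × Pt → ℝ) :
    es t (fun e => ∑ i ∈ s, F i e) = ∑ i ∈ s, es t (F i) := by
  simp only [es_eq, Finset.sum_add_distrib]

lemma es_congr {t : Tri} {F G : Pt × Pt → ℝ} (h : ∀ e ∈ t.edgeList, F e = G e) :
    es t F = es t G := by
  unfold es
  congr 1
  exact List.map_congr_left h

lemma es_mono {t : Tri} {F G : Pt × Pt → ℝ} (h : ∀ e ∈ t.edgeList, F e ≤ G e) :
    es t F ≤ es t G := by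
  rw [es_eq, es_eq]
  have h1 := h (t.A, t.B) (by simp [Tri.edgeList])
  have h2 := h (t.B, t.C) (by simp [Tri.edgeList])
  have h3 := h (t.C, t.A) (by simp [Tri.edgeList])
  linarith

lemma es_zero (t : Tri) : es t (fun _ => 0) = 0 := by rw [es_eq]; simp

lemma es_nonneg {t : Tri} {F : Pt × Pt → ℝ} (h : ∀ e ∈ t.edgeList, 0 ≤ F e) : 0 ≤ es t F := by
  rw [← es_zero t]; exact es_mono h

lemma sh_sum {t : Tri} (ht : t.Nondeg) (e : Pt × Pt) (c : ℝ) :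
    (if sh t e then c else 0) = es t (fun e' => if SameEdge e e' then c else 0) := by
  obtain ⟨h1, h2, h3⟩ := nondeg_ne ht
  have d1 : SameEdge e (t.A, t.B) → ¬ SameEdge e (t.B, t.C) := by
    intro a b
    rcases a.symm.trans b with h | h <;> simp only [Prod.mk.injEq] at h
    · exact h1 h.1.symm
    · exact h3 h.2
  have d2 : SameEdge e (t.A, t.B) → ¬ SameEdge e (t.C, t.A) := by
    intro a b
    rcases a.symm.trans b with h | h <;> simp only [Prod.mk.injEq] at h
    · exact h3 h.1
    · exact h2 h.1.symm
  have d3 : SameEdge e (t.B, t.C) → ¬ SameEdge e (t.C, t.A) := by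
    intro a b
    rcases a.symm.trans b with h | h <;> simp only [Prod.mk.injEq] at h
    · exact h2 h.1.symm
    · exact h1 h.2
  have hsh : sh t e ↔ SameEdge e (t.A, t.B) ∨ SameEdge e (t.B, t.C) ∨ SameEdge e (t.C, t.A) := by
    unfold sh Tri.edgeList; simp
  rw [es_eq]
  by_cases a1 : SameEdge e (t.A, t.B)
  · simp [hsh, a1, d1 a1, d2 a1]
  · by_cases a2 : SameEdge e (t.B, t.C)
    · simp [hsh, a1, a2, d3 a2]
    · by_cases a3 : SameEdge e (t.C, t.A) <;> simp [hsh, a1, a2, a3]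

lemma es_swap {t t' : Tri} (ht : t.Nondeg) (ht' : t'.Nondeg) (k : Pt × Pt → ℝ)
    (hk : ∀ P Q, k (P, Q) = k (Q, P)) :
    es t (fun e => if sh t' e then k e else 0) = es t' (fun e => if sh t e then k e else 0) := by
  have hk2 : ∀ e e', SameEdge e e' → k e = k e' := by
    rintro ⟨P, Q⟩ e' (rfl | rfl)
    · rfl
    · exact hk P Q
  simp_rw [sh_sum ht, sh_sum ht']
  have : ∀ e e', (if SameEdge e e' then k e else 0) = (if SameEdge e' e then k e' else 0) := by
    intro e e'
    by_cases h : SameEdge e e'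
    · rw [if_pos h, if_pos h.symm, hk2 _ _ h]
    · rw [if_neg h, if_neg (fun h' => h h'.symm)]
  rw [show (fun e => es t' (fun e' => if SameEdge e e' then k e else 0)) =
    (fun e => es t' (fun e' => if SameEdge e' e then k e' else 0)) by
      funext e; congr 1; funext e'; exact this e e']
  simp only [es_eq]
  ring

section
variable {Ω : Set Pt} (T : Triangulation Ω)

lemma nb_opp {t t' : Tri} (ht : t ∈ T.tris) (ht' : t' ∈ T.tris) (hne : t ≠ t') {e : Pt × Pt}
    (h : sh t e) (h' : sh t' e) : Sd t e.1 e.2 * Sd t' e.1 e.2 < 0 := by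
  obtain ⟨R, hR⟩ := sh_lab h
  obtain ⟨R', hR'⟩ := sh_lab h'
  have n1 : Sd t e.1 e.2 ≠ 0 := by rw [hR.Sd_eq]; exact hR.orient_ne (T.nondeg t ht)
  have n2 : Sd t' e.1 e.2 ≠ 0 := by rw [hR'.Sd_eq]; exact hR'.orient_ne (T.nondeg t' ht')
  by_contra hcon
  push Not at hcon
  have := overlap hR hR' (T.nondeg t ht) (T.nondeg t' ht')
    (lt_of_le_of_ne hcon (mul_ne_zero n1 n2).symm)
  rw [T.disj t ht t' ht' hne] at this
  exact Set.not_nonempty_empty this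

lemma nb_unique {t t1 t2 : Tri} (ht : t ∈ T.tris) (h1 : t1 ∈ T.tris) (h2 : t2 ∈ T.tris)
    (n1 : t ≠ t1) (n2 : t ≠ t2) {e : Pt × Pt} (h : sh t e) (s1 : sh t1 e) (s2 : sh t2 e) :
    t1 = t2 := by
  by_contra hne
  have a := nb_opp T ht h1 n1 h s1
  have b := nb_opp T ht h2 n2 h s2
  have c := nb_opp T h1 h2 hne s1 s2
  have := mul_pos_of_neg_of_neg a b
  nlinarith [mul_self_nonneg (Sd t e.1 e.2), mul_nonneg (mul_self_nonneg (Sd t e.1 e.2)) (neg_nonneg.mpr c.le)]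

/-- Sum over (unordered) pairs of neighbours. -/
def pairSum (G : Tri → Tri → Pt × Pt → ℝ) : ℝ :=
  (1/2) * ∑ t ∈ T.tris, ∑ t' ∈ T.tris,
    if t ≠ t' then es t (fun e => if sh t' e then G t t' e else 0) else 0

lemma pairing (g : Tri → Pt × Pt → ℝ) (hg : ∀ t P Q, g t (P, Q) = g t (Q, P))
    (h0 : ∀ t ∈ T.tris, ∀ e ∈ t.edgeList, (∀ t' ∈ T.tris, t ≠ t' → ¬ sh t' e) → g t e = 0) :
    ∑ t ∈ T.tris, es t (g t) = pairSum T (fun t t' e => g t e + g t' e) := by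
  have s1 : ∑ t ∈ T.tris, es t (g t) = ∑ t ∈ T.tris, ∑ t' ∈ T.tris,
      if t ≠ t' then es t (fun e => if sh t' e then g t e else 0) else 0 := by
    refine Finset.sum_congr rfl fun t ht => ?_
    rw [show (∑ t' ∈ T.tris, if t ≠ t' then es t (fun e => if sh t' e then g t e else 0) else 0) =
      ∑ t' ∈ T.tris, es t (fun e => if t ≠ t' ∧ sh t' e then g t e else 0) by
        refine Finset.sum_congr rfl fun t' _ => ?_
        by_cases h : t ≠ t'
        · simp [h]
        · simp only [h, if_false, false_and]; exact (es_zero t).symm]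
    rw [← es_sum]
    refine es_congr fun e he => ?_
    by_cases hex : ∃ t' ∈ T.tris, t ≠ t' ∧ sh t' e
    · obtain ⟨t', ht', hne, hs⟩ := hex
      rw [Finset.sum_eq_single t']
      · rw [if_pos ⟨hne, hs⟩]
      · intro b hb hbt
        rw [if_neg]
        rintro ⟨q1, q2⟩
        exact hbt (nb_unique T ht hb ht' q1 hne (sh_self he) q2 hs)
      · intro h; exact absurd ht' h
    · push Not at hex
      rw [h0 t ht e he hex]; simp
  have s2 : ∑ t ∈ T.tris, es t (g t) = ∑ t ∈ T.tris, ∑ t' ∈ T.tris,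
      if t ≠ t' then es t (fun e => if sh t' e then g t' e else 0) else 0 := by
    rw [s1, Finset.sum_comm]
    refine Finset.sum_congr rfl fun t ht => Finset.sum_congr rfl fun t' ht' => ?_
    by_cases h : t ≠ t'
    · rw [if_pos h, if_pos h.symm, es_swap (T.nondeg _ ht') (T.nondeg _ ht) _ (hg t')]
    · rw [if_neg h, if_neg (fun h' => h h'.symm)]
  have : ∑ t ∈ T.tris, es t (g t) + ∑ t ∈ T.tris, es t (g t) =
    ∑ t ∈ T.tris, ∑ t' ∈ T.tris,
    if t ≠ t' then es t (fun e => if sh t' e then g t e + g t' e else 0) else 0 := by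
    nth_rewrite 1 [s1]; rw [s2, ← Finset.sum_add_distrib]
    refine Finset.sum_congr rfl fun t ht => ?_
    rw [← Finset.sum_add_distrib]
    refine Finset.sum_congr rfl fun t' ht' => ?_
    by_cases h : t ≠ t'
    · simp only [if_pos h]
      rw [← es_add]
      refine es_congr fun e _ => ?_
      by_cases h2 : sh t' e <;> simp [h2]
    · simp [h]
  unfold pairSum
  linarith

lemma pairSum_congr {G H : Tri → Tri → Pt × Pt → ℝ}
    (h : ∀ t ∈ T.tris, ∀ t' ∈ T.tris, t ≠ t' → ∀ e ∈ t.edgeList, sh t' e → G t t' e = H t t' e) :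
    pairSum T G = pairSum T H := by
  unfold pairSum
  congr 1
  refine Finset.sum_congr rfl fun t ht => Finset.sum_congr rfl fun t' ht' => ?_
  by_cases hne : t ≠ t'
  · rw [if_pos hne, if_pos hne]
    refine es_congr fun e he => ?_
    by_cases h2 : sh t' e
    · rw [if_pos h2, if_pos h2, h t ht t' ht' hne e he h2]
    · rw [if_neg h2, if_neg h2]
  · rw [if_neg hne, if_neg hne]

lemma pairSum_mono {G H : Tri → Tri → Pt × Pt → ℝ}
    (h : ∀ t ∈ T.tris, ∀ t' ∈ T.tris, t ≠ t' → ∀ e ∈ t.edgeList, sh t' e → G t t' e ≤ H t t' e) :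
    pairSum T G ≤ pairSum T H := by
  unfold pairSum
  refine mul_le_mul_of_nonneg_left ?_ (by norm_num)
  refine Finset.sum_le_sum fun t ht => Finset.sum_le_sum fun t' ht' => ?_
  by_cases hne : t ≠ t'
  · rw [if_pos hne, if_pos hne]
    refine es_mono fun e he => ?_
    by_cases h2 : sh t' e
    · rw [if_pos h2, if_pos h2]; exact h t ht t' ht' hne e he h2
    · rw [if_neg h2, if_neg h2]
  · rw [if_neg hne, if_neg hne]

lemma pairSum_zero : pairSum T (fun _ _ _ => 0) = 0 := by
  unfold pairSum
  simp [es_eq]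

lemma pairSum_nonneg {G : Tri → Tri → Pt × Pt → ℝ}
    (h : ∀ t ∈ T.tris, ∀ t' ∈ T.tris, t ≠ t' → ∀ e ∈ t.edgeList, sh t' e → 0 ≤ G t t' e) :
    0 ≤ pairSum T G := by
  rw [← pairSum_zero T]; exact pairSum_mono T h

lemma es_cs (t : Tri) (F G H : Pt × Pt → ℝ) (hG : ∀ e, 0 ≤ G e) (hH : ∀ e, 0 ≤ H e)
    (h : ∀ e, F e ^ 2 ≤ G e * H e) : es t F ^ 2 ≤ es t G * es t H := by
  have := Finset.sum_sq_le_sum_mul_sum_of_sq_le_mul (Finset.univ : Finset (Fin 3))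
    (r := fun i => F (t.edgeList.get ⟨i, by simp [Tri.edgeList]⟩))
    (f := fun i => G (t.edgeList.get ⟨i, by simp [Tri.edgeList]⟩))
    (g := fun i => H (t.edgeList.get ⟨i, by simp [Tri.edgeList]⟩))
    (fun i _ => hG _) (fun i _ => hH _) (fun i _ => h _)
  simp only [Fin.sum_univ_three] at this
  simpa [es_eq, Tri.edgeList] using this

/-- Cauchy-Schwarz for pair sums. -/
lemma pairSum_cs (F G H : Tri → Tri → Pt × Pt → ℝ) (hG : ∀ t t' e, 0 ≤ G t t' e)
    (hH : ∀ t t' e, 0 ≤ H t t' e) (h : ∀ t t' e, F t t' e ^ 2 ≤ G t t' e * H t t' e) :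
    pairSum T F ^ 2 ≤ pairSum T G * pairSum T H := by
  have nn : ∀ (G : Tri → Tri → Pt × Pt → ℝ), (∀ t t' e, 0 ≤ G t t' e) → ∀ t t', 
      0 ≤ if t ≠ t' then es t (fun e => if sh t' e then G t t' e else 0) else 0 := by
    intro G hG t t'
    split_ifs
    · exact es_nonneg fun e _ => by split_ifs; exacts [hG _ _ _, le_rfl]
    · exact le_rfl
  unfold pairSum
  rw [show ∀ a b : ℝ, (1/2 * a) * (1/2 * b) = (1/4) * (a * b) by intros; ring, mul_pow,
    show ((1:ℝ)/2)^2 = 1/4 by norm_num]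
  refine mul_le_mul_of_nonneg_left ?_ (by norm_num)
  refine Finset.sum_sq_le_sum_mul_sum_of_sq_le_mul _ 
    (fun t _ => Finset.sum_nonneg fun t' _ => nn G hG t t')
    (fun t _ => Finset.sum_nonneg fun t' _ => nn H hH t t') fun t _ => ?_
  refine Finset.sum_sq_le_sum_mul_sum_of_sq_le_mul _ 
    (fun t' _ => nn G hG t t') (fun t' _ => nn H hH t t') fun t' _ => ?_
  split_ifs
  · refine es_cs _ _ _ _ ?_ ?_ ?_
    · intro e; split_ifs; exacts [hG _ _ _, le_rfl]
    · intro e; split_ifs; exacts [hH _ _ _, le_rfl]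
    · intro e; split_ifs; exacts [h _ _ _, by simp]
  · simp

lemma jumpSq_eq (u : Tri → Pt → ℝ) : T.jumpSq u = pairSum T (fun t t' e =>
    (dist e.1 e.2)⁻¹ * segInt e.1 e.2 (fun x => (u t x - u t' x) ^ 2)) := by
  unfold Triangulation.jumpSq pairSum Triangulation.edgeJump es sh
  congr!
end


lemma ln_cont (d : Pt) (τ : ℝ) : Continuous (fun s => ln d τ s) := by
  unfold ln
  refine (PiLp.continuous_toLp 2 _).comp ?_
  refine continuous_pi fun i => ?_
  fin_cases i <;> simp <;> fun_prop

lemma ftc_cs {f f' g : ℝ → ℝ} {α β : ℝ} (h : α < β) (hc : ContinuousOn f (Icc α β))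
    (hd : ∀ s ∈ Ioo α β, HasDerivAt f (f' s) s) (hg : ∀ s ∈ Ioo α β, (f' s) ^ 2 ≤ g s)
    (hgi : IntegrableOn g (Ioo α β)) : (f β - f α) ^ 2 ≤ (β - α) * ∫ s in Ioo α β, g s := by
  have hm : AEStronglyMeasurable f' (volume.restrict (Ioo α β)) := by
    refine (measurable_deriv f).aestronglyMeasurable.congr ?_
    filter_upwards [ae_restrict_mem measurableSet_Ioo] with s hs
    exact (hd s hs).deriv
  have hsq : IntegrableOn (fun s => (f' s) ^ 2) (Ioo α β) := by
    refine Integrable.mono' hgi (hm.pow 2) ?_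
    filter_upwards [ae_restrict_mem measurableSet_Ioo] with s hs
    rw [Real.norm_eq_abs, abs_of_nonneg (sq_nonneg _)]
    exact hg s hs
  have hfi : IntegrableOn f' (Ioo α β) := by
    have h1 : IntegrableOn (fun s => 1 + (f' s) ^ 2) (Ioo α β) :=
      Integrable.add (integrableOn_const (by simp)) hsq
    refine Integrable.mono' h1 hm ?_
    filter_upwards with s
    rw [Real.norm_eq_abs]
    rcases abs_cases (f' s) with h | h <;> nlinarith [sq_nonneg (f' s - 1), sq_nonneg (f' s + 1)]
  have hF : ∫ s in Ioo α β, f' s = f β - f α := by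
    rw [← intervalIntegral.integral_eq_sub_of_hasDerivAt_of_le h.le hc hd,
      intervalIntegral.integral_of_le h.le, integral_Ioc_eq_integral_Ioo]
    rw [intervalIntegrable_iff_integrableOn_Ioo_of_le h.le]; exact hfi
  set D := f β - f α
  set c := D / (β - α)
  have hba : 0 < β - α := sub_pos.mpr h
  have hcD : c * (β - α) = D := div_mul_cancel₀ _ hba.ne'
  have h0 : ∫ s in Ioo α β, (2 * c * f' s - c ^ 2) ≤ ∫ s in Ioo α β, g s := by
    refine setIntegral_mono_on ?_ hgi measurableSet_Ioo fun s hs => ?_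
    · exact (hfi.const_mul _).sub (integrableOn_const (by simp))
    · have := hg s hs
      nlinarith [sq_nonneg (f' s - c)]
  rw [integral_sub (hfi.const_mul _) (integrableOn_const (by simp)), integral_const_mul, hF] at h0
  simp only [integral_const, smul_eq_mul, measureReal_restrict_apply_univ, Real.volume_real_Ioo_of_le h.le] at h0
  have : (β - α) * (2 * c * D - (β - α) * c ^ 2) = D ^ 2 := by
    rw [← hcD]; ring
  rw [← this]
  exact mul_le_mul_of_nonneg_left h0 hba.le

def sg (d : Pt) (t : Tri) (e : Pt × Pt) : ℝ :=
  if 0 < Sd t e.1 e.2 * (cy d e.2 - cy d e.1) then 1 else -1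

lemma sg_swap (d : Pt) (t : Tri) (P Q : Pt) : sg d t (P, Q) = sg d t (Q, P) := by
  unfold sg
  simp only
  rw [Sd_swap t P Q, show -Sd t P Q * (cy d P - cy d Q) = Sd t P Q * (cy d Q - cy d P) by ring]

lemma sg_or (d : Pt) (t : Tri) (e : Pt × Pt) : sg d t e = 1 ∨ sg d t e = -1 := by
  unfold sg; split_ifs <;> simp

def iw (d : Pt) (τ s0 s1 : ℝ) (e : Pt × Pt) : ℝ :=
  if Crs d τ e ∧ Xc d τ e ∈ Ioo s0 s1 then 1 else 0

lemma iw_swap (d : Pt) (τ s0 s1 : ℝ) (P Q : Pt) : iw d τ s0 s1 (P, Q) = iw d τ s0 s1 (Q, P) := by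
  unfold iw
  by_cases h : Crs d τ (P, Q)
  · simp only [h, (Crs_swap d τ P Q).mp h, Xc_swap h]
  · have h' : ¬ Crs d τ (Q, P) := fun h' => h ((Crs_swap d τ P Q).mpr h')
    simp [h, h']

lemma iw_nonneg (d : Pt) (τ s0 s1 : ℝ) (e : Pt × Pt) : 0 ≤ iw d τ s0 s1 e := by
  unfold iw; split_ifs <;> simp

lemma iw_sq (d : Pt) (τ s0 s1 : ℝ) (e : Pt × Pt) : iw d τ s0 s1 e * iw d τ s0 s1 e = iw d τ s0 s1 e := by
  unfold iw; split_ifs <;> simp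

def cl (d : Pt) (τ : ℝ) (t : Tri) : ℝ := volume.real {s | ln d τ s ∈ t.openHull}

section
variable {Ω : Set Pt} (T : Triangulation Ω)

lemma tri_open_sub {t : Tri} (ht : t ∈ T.tris) : t.openHull ⊆ Ω := by
  rw [T.cover]
  exact interior_mono (subset_biUnion_of_mem (u := fun t : Tri => t.closedHull) ht)

lemma Om_open (T : Triangulation Ω) : IsOpen Ω := by rw [T.cover]; exact isOpen_interior

lemma sg_nb {d : Pt} {t t' : Tri} (ht : t ∈ T.tris) (ht' : t' ∈ T.tris) (hne : t ≠ t') {e : Pt × Pt}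
    (h : sh t e) (h' : sh t' e) (hc : cy d e.2 - cy d e.1 ≠ 0) : sg d t' e = - sg d t e := by
  have h1 := nb_opp T ht ht' hne h h'
  unfold sg
  set a := Sd t e.1 e.2
  set b := Sd t' e.1 e.2
  set c := cy d e.2 - cy d e.1
  have h2 : (a * c) * (b * c) < 0 := by
    have := mul_neg_of_neg_of_pos h1 (mul_self_pos.mpr hc)
    linarith
  by_cases hp : 0 < a * c
  · rw [if_pos hp, if_neg]
    intro h3; nlinarith
  · rw [if_neg hp, if_pos]
    · simp
    · push Not at hp
      by_contra h3; push Not at h3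
      nlinarith

lemma iw_sg_nb {d : Pt} {τ s0 s1 : ℝ} {t t' : Tri} (ht : t ∈ T.tris) (ht' : t' ∈ T.tris)
    (hne : t ≠ t') {e : Pt × Pt} (h : sh t e) (h' : sh t' e) :
    iw d τ s0 s1 e * sg d t' e = - (iw d τ s0 s1 e * sg d t e) := by
  by_cases hw : Crs d τ e ∧ Xc d τ e ∈ Ioo s0 s1
  · rw [sg_nb T ht ht' hne h h' hw.1.ne]; ring
  · unfold iw; rw [if_neg hw]; simp

structure Win (d : Pt) (τ s0 s1 : ℝ) : Prop where
  hd : UnitV d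
  gen : ∀ t ∈ T.tris, GenT d τ t
  lt : s0 < s1
  sub : ∀ s ∈ Icc s0 s1, ln d τ s ∈ Ω
  ne : ∀ t ∈ T.tris, ∀ e ∈ t.edgeList, Crs d τ e → Xc d τ e ≠ s0 ∧ Xc d τ e ≠ s1

variable {T} in
lemma Win.ne' {d : Pt} {τ s0 s1 : ℝ} (w : Win T d τ s0 s1) {t : Tri} (ht : t ∈ T.tris) {P Q R : Pt}
    (h : Lab t P Q R) (hc : Crs d τ (P, Q)) : Xc d τ (P, Q) ≠ s0 ∧ Xc d τ (P, Q) ≠ s1 := by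
  have : (P, Q) ∈ t.edgeList ∨ (Q, P) ∈ t.edgeList := by
    unfold Tri.edgeList
    rcases h with h | h | h | h | h | h <;> obtain ⟨rfl, rfl, rfl⟩ := h <;> simp
  rcases this with h | h
  · exact w.ne t ht _ h hc
  · rw [Xc_swap hc]
    exact w.ne t ht _ h ((Crs_swap _ _ _ _).mp hc)

variable {T} in
lemma Win.nb {d : Pt} {τ s0 s1 : ℝ} (w : Win T d τ s0 s1) {t : Tri} (ht : t ∈ T.tris) {e : Pt × Pt}
    (he : e ∈ t.edgeList) (hn : ∀ t' ∈ T.tris, t ≠ t' → ¬ sh t' e) : iw d τ s0 s1 e = 0 := by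
  unfold iw
  rw [if_neg]
  rintro ⟨hc, hX⟩
  rcases T.conforming t ht e he with h | ⟨t', ht', hne, h⟩
  · have h1 : ln d τ (Xc d τ e) ∈ Ω := w.sub _ ⟨hX.1.le, hX.2.le⟩
    have h2 : ln d τ (Xc d τ e) ∈ segment ℝ e.1 e.2 := by
      rw [ln_Xc w.hd hc, segment_eq_image']
      exact ⟨th d τ e, ⟨(th_mem hc).1.le, (th_mem hc).2.le⟩, rfl⟩
    have h3 := h h2
    rw [(Om_open T).frontier_eq] at h3
    exact h3.2 h1
  · exact hn t' ht' hne.symm h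

lemma cl_TriX {d : Pt} {τ : ℝ} {t : Tri} {P Q R : Pt} (h : TriX d τ t P Q R) :
    cl d τ t = Xc d τ (P, R) - Xc d τ (P, Q) := by
  unfold cl
  rw [show {s | ln d τ s ∈ t.openHull} = Ioo (Xc d τ (P, Q)) (Xc d τ (P, R)) by
    ext s; exact h.mo s]
  exact Real.volume_real_Ioo_of_le h.lt.le

lemma norm_ln {d : Pt} (hd : UnitV d) (τ s : ℝ) : ‖ln d τ s‖ ^ 2 = s ^ 2 + τ ^ 2 := by
  rw [EuclideanSpace.norm_eq, Real.sq_sqrt (by positivity)]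
  simp only [Fin.sum_univ_two, Real.norm_eq_abs, sq_abs]
  rw [ln_zero, ln_one]
  unfold UnitV at hd
  linear_combination (s ^ 2 + τ ^ 2) * hd

lemma sum_cl {d : Pt} (hd : UnitV d) (τ : ℝ) {R0 : ℝ} (hR : 0 < R0) (hΩ : Ω ⊆ Metric.ball 0 R0) :
    ∑ t ∈ T.tris, cl d τ t ≤ 2 * R0 := by
  have hsub : ∀ t ∈ T.tris, {s | ln d τ s ∈ t.openHull} ⊆ Ioo (-R0) R0 := by
    intro t ht s hs
    have h1 := hΩ (tri_open_sub T ht hs)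
    rw [mem_ball_zero_iff] at h1
    have h2 := norm_ln hd τ s
    have h3 : ‖ln d τ s‖ ^ 2 < R0 ^ 2 := pow_lt_pow_left₀ h1 (norm_nonneg _) (by norm_num)
    rw [mem_Ioo, ← abs_lt]
    refine abs_lt_of_sq_lt_sq ?_ hR.le
    nlinarith [sq_nonneg τ]
  have hU : volume.real (⋃ t ∈ T.tris, {s | ln d τ s ∈ t.openHull}) =
      ∑ t ∈ T.tris, cl d τ t := by
    unfold cl
    rw [measureReal_biUnion_finset (h := fun t ht => ((measure_mono (hsub t ht)).trans_lt (by simp)).ne)]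
    · intro t ht t' ht' hne
      refine Set.disjoint_left.mpr fun s h1 h2 => ?_
      have : ln d τ s ∈ t.openHull ∩ t'.openHull := ⟨h1, h2⟩
      rw [T.disj t ht t' ht' hne] at this
      exact this
    · intro t ht
      exact (isOpen_interior.preimage (ln_cont d τ)).measurableSet
  rw [← hU]
  calc _ ≤ volume.real (Ioo (-R0) R0) := by
        refine measureReal_mono (iUnion₂_subset hsub) (by simp)
    _ = 2 * R0 := by rw [Real.volume_real_Ioo_of_le (by linarith)]; ring

lemma edge_le {R0 : ℝ} (hΩ : Ω ⊆ Metric.ball 0 R0) {t : Tri} (ht : t ∈ T.tris) {P Q R : Pt}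
    (h : Lab t P Q R) : dist P Q ≤ 2 * R0 := by
  have hne : (interior t.closedHull).Nonempty := by
    have := overlap h h (T.nondeg t ht) (T.nondeg t ht) (by
      rw [h.Sd_eq]; exact mul_self_pos.mpr (h.orient_ne (T.nondeg t ht)))
    rw [Set.inter_self] at this; exact this
  have hconv : Convex ℝ t.closedHull := convex_convexHull ℝ _
  have hcl : t.closedHull ⊆ Metric.closedBall 0 R0 := by
    calc t.closedHull ⊆ closure t.closedHull := subset_closure
      _ = closure (interior t.closedHull) :=
        (hconv.closure_interior_eq_closure_of_nonempty_interior hne).symm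
      _ ⊆ closure (Metric.ball 0 R0) := closure_mono ((tri_open_sub T ht).trans hΩ)
      _ ⊆ _ := Metric.closure_ball_subset_closedBall
  have hP : P ∈ t.closedHull := by rw [h.hull]; exact subset_convexHull ℝ _ (by simp)
  have hQ : Q ∈ t.closedHull := by rw [h.hull]; exact subset_convexHull ℝ _ (by simp)
  have h1 := hcl hP
  have h2 := hcl hQ
  rw [Metric.mem_closedBall] at h1 h2
  have := dist_triangle_right P Q 0
  linarith

def MM (K R0 : ℝ) : ℝ := cO K * (2 * R0) + cZ K * (Real.exp (Lam K) * (2 * R0))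

lemma sum_ind_le {x : Pt} : ∑ t ∈ T.tris, (if x ∈ t.openHull then (1:ℝ) else 0) ≤ 1 := by
  by_cases h : ∃ t ∈ T.tris, x ∈ t.openHull
  · obtain ⟨t, ht, hx⟩ := h
    rw [Finset.sum_eq_single t]
    · rw [if_pos hx]
    · intro b hb hbt
      rw [if_neg]
      intro hxb
      have : x ∈ t.openHull ∩ b.openHull := ⟨hx, hxb⟩
      rw [T.disj t ht b hb hbt.symm] at this
      exact this
    · intro h; exact absurd ht h
  · push Not at h
    rw [Finset.sum_eq_zero fun t ht => if_neg (h t ht)]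
    norm_num

lemma no_cross_es {d : Pt} {τ s0 s1 : ℝ} {t : Tri} (h : ∀ e ∈ t.edgeList, ¬ Crs d τ e)
    (F : Pt × Pt → ℝ) : es t (fun e => iw d τ s0 s1 e * F e) = 0 := by
  rw [← es_zero t]
  refine es_congr fun e he => ?_
  unfold iw; rw [if_neg (fun hh => h e he hh.1)]; simp

lemma TriX_es {d : Pt} {τ s0 s1 : ℝ} {t : Tri} {P Q R : Pt} (h : TriX d τ t P Q R)
    (F : Pt × Pt → ℝ) (hF : ∀ P Q, iw d τ s0 s1 (P, Q) * F (P, Q) = iw d τ s0 s1 (Q, P) * F (Q, P)) :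
    es t (fun e => iw d τ s0 s1 e * F e) =
      iw d τ s0 s1 (P, Q) * F (P, Q) + iw d τ s0 s1 (P, R) * F (P, R) := by
  rw [h.lab.es_eq _ hF]
  have : iw d τ s0 s1 (Q, R) = 0 := by unfold iw; rw [if_neg (fun hh => h.c3 hh.1)]
  rw [this]; ring

lemma TriX_sg {d : Pt} {τ : ℝ} {t : Tri} {P Q R : Pt} (h : TriX d τ t P Q R) :
    sg d t (P, Q) = -1 ∧ sg d t (P, R) = 1 := by
  constructor
  · unfold sg; rw [if_neg (not_lt.mpr h.sin.le)]
  · unfold sg; rw [if_pos h.sout]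

def ng (d : Pt) (t : Tri) (e : Pt × Pt) : ℝ := (1 - sg d t e) / 2

set_option maxHeartbeats 1000000 in
lemma tri_count {d : Pt} {τ s0 s1 K R0 : ℝ} (w : Win T d τ s0 s1) (hK : T.ShapeRegular K)
    (hR : 0 < R0) (hΩ : Ω ⊆ Metric.ball 0 R0) {t : Tri} (ht : t ∈ T.tris) :
    es t (fun e => iw d τ s0 s1 e * (ng d t e * dist e.1 e.2)) ≤ cO K * cl d τ t
      - cZ K * es t (fun e => iw d τ s0 s1 e * (sg d t e * Pot d τ (Lam K) e))
      + cZ K * (Real.exp (Lam K) * (2 * R0)) * (if ln d τ s0 ∈ t.openHull then 1 else 0) := by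
  have hz := cZ_nonneg K
  have ho := cO_nonneg K
  have hcl : 0 ≤ cl d τ t := measureReal_nonneg
  have hind : (0:ℝ) ≤ if ln d τ s0 ∈ t.openHull then 1 else 0 := by split_ifs <;> simp
  have hl : 0 ≤ cZ K * (Real.exp (Lam K) * (2 * R0)) * (if ln d τ s0 ∈ t.openHull then 1 else 0) := by
    positivity
  rcases line_tri w.hd (T.nondeg t ht) (w.gen t ht) with ⟨_, h⟩ | ⟨P, Q, R, h⟩
  · rw [no_cross_es h, no_cross_es h]
    have := mul_nonneg ho hcl
    linarith
  · rw [TriX_es h _ (fun P Q => by unfold ng; simp only; rw [iw_swap, sg_swap, dist_comm]),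
      TriX_es h _ (fun P Q => by rw [iw_swap, sg_swap, Pot_swap]), cl_TriX h]
    obtain ⟨g1, g2⟩ := TriX_sg h
    unfold ng
    rw [g1, g2]
    have hst := potential_step w.hd (T.nondeg t ht) (hK t ht) h
    have hP1 := mul_nonneg hz (Pot_nonneg d τ (Lam K) (P, Q))
    have hP2 := mul_nonneg hz (Pot_nonneg d τ (Lam K) (P, R))
    have hb := mul_nonneg ho (sub_nonneg.mpr h.lt.le)
    have n1 := w.ne' ht h.lab h.c1
    have n2 := w.ne' ht h.lab.flip h.c2
    have hlt := h.lt
    by_cases hb1 : Xc d τ (P, Q) ∈ Ioo s0 s1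
    · have e1 : iw d τ s0 s1 (P, Q) = 1 := by unfold iw; rw [if_pos ⟨h.c1, hb1⟩]
      rw [e1]
      by_cases hb2 : Xc d τ (P, R) ∈ Ioo s0 s1
      · have e2 : iw d τ s0 s1 (P, R) = 1 := by unfold iw; rw [if_pos ⟨h.c2, hb2⟩]
        rw [e2]
        simp only
        linarith
      · have e2 : iw d τ s0 s1 (P, R) = 0 := by unfold iw; rw [if_neg (fun hh => hb2 hh.2)]
        rw [e2]
        simp only
        linarith
    · have e1 : iw d τ s0 s1 (P, Q) = 0 := by unfold iw; rw [if_neg (fun hh => hb1 hh.2)]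
      rw [e1]
      by_cases hb2 : Xc d τ (P, R) ∈ Ioo s0 s1
      · have e2 : iw d τ s0 s1 (P, R) = 1 := by unfold iw; rw [if_pos ⟨h.c2, hb2⟩]
        rw [e2]
        have hlo : Xc d τ (P, Q) < s0 := by
          by_contra hcon
          push Not at hcon
          exact hb1 ⟨lt_of_le_of_ne hcon n1.1.symm, hlt.trans hb2.2⟩
        rw [if_pos ((h.mo s0).mpr ⟨hlo, hb2.1⟩)]
        have h1 : Pot d τ (Lam K) (P, R) ≤ Real.exp (Lam K) * dist P R := Pot_le w.hd τ (Lam_nonneg K) (P, R)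
        have h2 : Real.exp (Lam K) * dist P R ≤ Real.exp (Lam K) * (2 * R0) := by
          gcongr; exact edge_le T hΩ ht h.lab.flip
        have h3 := mul_le_mul_of_nonneg_left (h1.trans h2) hz
        simp only
        linarith
      · have e2 : iw d τ s0 s1 (P, R) = 0 := by unfold iw; rw [if_neg (fun hh => hb2 hh.2)]
        rw [e2]
        simp only
        linarith

lemma count_bound {d : Pt} {τ s0 s1 K R0 : ℝ} (w : Win T d τ s0 s1) (hK : T.ShapeRegular K)
    (hR : 0 < R0) (hΩ : Ω ⊆ Metric.ball 0 R0) :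
    pairSum T (fun _ _ e => iw d τ s0 s1 e * dist e.1 e.2) ≤ MM K R0 := by
  have hz := cZ_nonneg K
  have ho := cO_nonneg K
  have hA := pairing T (fun t e => iw d τ s0 s1 e * (ng d t e * dist e.1 e.2))
    (fun t P Q => by unfold ng; rw [iw_swap, sg_swap, dist_comm])
    (fun t ht e he hn => by rw [w.nb ht he hn, zero_mul])
  have hB := pairing T (fun t e => iw d τ s0 s1 e * (sg d t e * Pot d τ (Lam K) e))
    (fun t P Q => by rw [iw_swap, sg_swap, Pot_swap])
    (fun t ht e he hn => by rw [w.nb ht he hn, zero_mul])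
  rw [pairSum_congr T (H := fun _ _ _ => 0), pairSum_zero] at hB
  swap
  · intro t ht t' ht' hne e he hs
    have := iw_sg_nb T (d := d) (τ := τ) (s0 := s0) (s1 := s1) ht ht' hne (sh_self he) hs
    linear_combination (Pot d τ (Lam K) e) * this
  rw [pairSum_congr T (H := fun _ _ e => iw d τ s0 s1 e * dist e.1 e.2)] at hA
  swap
  · intro t ht t' ht' hne e he hs
    have := iw_sg_nb T (d := d) (τ := τ) (s0 := s0) (s1 := s1) ht ht' hne (sh_self he) hs
    unfold ng
    linear_combination (-(dist e.1 e.2) / 2) * this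
  rw [← hA]
  have hS := Finset.sum_le_sum fun t ht => tri_count T w hK hR hΩ ht
  rw [Finset.sum_add_distrib, Finset.sum_sub_distrib, ← Finset.mul_sum, ← Finset.mul_sum, hB,
    ← Finset.mul_sum] at hS
  have h1 := mul_le_mul_of_nonneg_left (sum_cl T w.hd τ hR hΩ) ho
  have h2 := mul_le_mul_of_nonneg_left (sum_ind_le T (x := ln d τ s0))
    (show 0 ≤ cZ K * (Real.exp (Lam K) * (2 * R0)) by positivity)
  unfold MM
  linarith
end


section
variable {Ω : Set Pt} (T : Triangulation Ω)

def Vf (u : Tri → Pt → ℝ) (x : Pt) : ℝ := ∑ t ∈ T.tris, t.openHull.indicator (u t) x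
def gd (u : Tri → Pt → ℝ) (t : Tri) (x : Pt) : ℝ :=
  t.openHull.indicator (fun x => ‖fderiv ℝ (u t) x‖ ^ 2) x
def Gf (u : Tri → Pt → ℝ) (x : Pt) : ℝ := ∑ t ∈ T.tris, gd u t x
def jf (d : Pt) (τ : ℝ) (u : Tri → Pt → ℝ) (t t' : Tri) (e : Pt × Pt) : ℝ :=
  (u t (ln d τ (Xc d τ e)) - u t' (ln d τ (Xc d τ e))) ^ 2 / |cy d e.2 - cy d e.1|
def JE (d : Pt) (τ s0 s1 : ℝ) (u : Tri → Pt → ℝ) : ℝ :=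
  pairSum T (fun t t' e => iw d τ s0 s1 e * jf d τ u t t' e)

lemma gd_nonneg (u : Tri → Pt → ℝ) (t : Tri) (x : Pt) : 0 ≤ gd u t x :=
  Set.indicator_nonneg (fun _ _ => by positivity) _

lemma Gf_nonneg (u : Tri → Pt → ℝ) (x : Pt) : 0 ≤ Gf T u x :=
  Finset.sum_nonneg fun t _ => gd_nonneg u t x

lemma jf_nonneg (d : Pt) (τ : ℝ) (u : Tri → Pt → ℝ) (t t' : Tri) (e : Pt × Pt) :
    0 ≤ jf d τ u t t' e := by unfold jf; positivity

lemma norm_unit {d : Pt} (hd : UnitV d) : ‖d‖ = 1 := by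
  rw [EuclideanSpace.norm_eq]
  simp only [Fin.sum_univ_two, Real.norm_eq_abs, sq_abs]
  rw [hd]; simp

lemma ln_eq (d : Pt) (τ s : ℝ) : ln d τ s = ln d τ 0 + s • d := by
  ext i; fin_cases i
  · show ln d τ s 0 = (ln d τ 0 + s • d) 0
    simp [ln_zero]; ring
  · show ln d τ s 1 = (ln d τ 0 + s • d) 1
    simp [ln_one]; ring

lemma ln_hasDeriv (d : Pt) (τ s : ℝ) : HasDerivAt (fun s => ln d τ s) d s := by
  have : (fun s => ln d τ s) = fun s => ln d τ 0 + s • d := by funext s; exact ln_eq d τ s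
  rw [this]
  simpa using ((hasDerivAt_id s).smul_const d).const_add (ln d τ 0)

lemma ftc_tri {u : Pt → ℝ} {t : Tri} {d : Pt} (hd : UnitV d) {τ α β : ℝ} (hab : α < β)
    (hc : ContinuousOn u t.closedHull) (hdf : DifferentiableOn ℝ u t.openHull)
    (h1 : ∀ s ∈ Icc α β, ln d τ s ∈ t.closedHull) (h2 : ∀ s ∈ Ioo α β, ln d τ s ∈ t.openHull)
    (hi : IntegrableOn (fun s => ‖fderiv ℝ u (ln d τ s)‖ ^ 2) (Ioo α β)) :
    (u (ln d τ β) - u (ln d τ α)) ^ 2 ≤ (β - α) * ∫ s in Ioo α β, ‖fderiv ℝ u (ln d τ s)‖ ^ 2 := by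
  refine ftc_cs (f := fun s => u (ln d τ s)) (f' := fun s => fderiv ℝ u (ln d τ s) d) hab
    (hc.comp (ln_cont d τ).continuousOn h1) ?_ ?_ hi
  · intro s hs
    have hda : DifferentiableAt ℝ u (ln d τ s) :=
      hdf.differentiableAt (isOpen_interior.mem_nhds (h2 s hs))
    exact hda.hasFDerivAt.comp_hasDerivAt s (ln_hasDeriv d τ s)
  · intro s hs
    have := (fderiv ℝ u (ln d τ s)).le_opNorm d
    rw [norm_unit hd, mul_one, Real.norm_eq_abs] at this
    rw [← sq_abs]
    gcongr

lemma tri_diff {d : Pt} {τ s0 s1 : ℝ} (w : Win T d τ s0 s1) {u : Tri → Pt → ℝ} (hu : T.PwH1 u)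
    {t : Tri} (ht : t ∈ T.tris) (hI : Integrable (fun s => gd u t (ln d τ s))) :
    (t.openHull.indicator (u t) (ln d τ s1) - t.openHull.indicator (u t) (ln d τ s0)
      + es t (fun e => iw d τ s0 s1 e * (sg d t e * u t (ln d τ (Xc d τ e))))) ^ 2 ≤
      cl d τ t * ∫ s in Ioo s0 s1, gd u t (ln d τ s) := by
  have hcl : 0 ≤ cl d τ t := measureReal_nonneg
  have hin : 0 ≤ ∫ s in Ioo s0 s1, gd u t (ln d τ s) :=
    integral_nonneg fun s => gd_nonneg _ _ _
  have hz := mul_nonneg hcl hin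
  have hlt := w.lt
  rcases line_tri w.hd (T.nondeg t ht) (w.gen t ht) with ⟨h0, h⟩ | ⟨P, Q, R, h⟩
  · have hno : ∀ s, ln d τ s ∉ t.openHull := fun s hh => h0 s (interior_subset hh)
    rw [no_cross_es h, indicator_of_notMem (hno s1), indicator_of_notMem (hno s0)]
    simpa using hz
  rw [TriX_es h]
  swap
  · intro P Q
    by_cases hc : Crs d τ (P, Q)
    · rw [iw_swap, sg_swap, Xc_swap hc]
    · rw [iw_swap d τ s0 s1 P Q]
      have : iw d τ s0 s1 (Q, P) = 0 := by
        unfold iw; rw [if_neg (fun hh => hc ((Crs_swap _ _ _ _).mpr hh.1))]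
      rw [this]; ring
  obtain ⟨g1, g2⟩ := TriX_sg h
  rw [g1, g2]
  have n1 := w.ne' ht h.lab h.c1
  have n2 := w.ne' ht h.lab.flip h.c2
  have hltX := h.lt
  have e1 : iw d τ s0 s1 (P, Q) = if Xc d τ (P, Q) ∈ Ioo s0 s1 then 1 else 0 := by
    unfold iw; simp [h.c1]
  have e2 : iw d τ s0 s1 (P, R) = if Xc d τ (P, R) ∈ Ioo s0 s1 then 1 else 0 := by
    unfold iw; simp [h.c2]
  have i0 : ∀ s, t.openHull.indicator (u t) (ln d τ s) =
      if s ∈ Ioo (Xc d τ (P, Q)) (Xc d τ (P, R)) then u t (ln d τ s) else 0 := by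
    intro s
    by_cases hs : ln d τ s ∈ t.openHull
    · rw [indicator_of_mem hs, if_pos ((h.mo s).mp hs)]
    · rw [indicator_of_notMem hs, if_neg (fun h' => hs ((h.mo s).mpr h'))]
  rw [e1, e2, i0, i0]
  rw [cl_TriX h] at hz ⊢
  have hmo := h.mo
  have hmc := h.mc
  set a := Xc d τ (P, Q)
  set b := Xc d τ (P, R)
  by_cases hab : a < s1 ∧ s0 < b
  · have hαβ : max a s0 < min b s1 := by
      rw [max_lt_iff, lt_min_iff, lt_min_iff]; exact ⟨⟨hltX, hab.1⟩, hab.2, hlt⟩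
    have hD : (if s1 ∈ Ioo a b then u t (ln d τ s1) else 0) - (if s0 ∈ Ioo a b then u t (ln d τ s0) else 0)
        + ((if a ∈ Ioo s0 s1 then 1 else 0) * (-1 * u t (ln d τ a)) +
          (if b ∈ Ioo s0 s1 then 1 else 0) * (1 * u t (ln d τ b))) =
        u t (ln d τ (min b s1)) - u t (ln d τ (max a s0)) := by
      have A : (if s1 ∈ Ioo a b then u t (ln d τ s1) else 0) +
          (if b ∈ Ioo s0 s1 then 1 else 0) * (1 * u t (ln d τ b)) = u t (ln d τ (min b s1)) := by
        rcases lt_or_gt_of_ne n2.2 with hh | hh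
        · rw [if_neg (fun q => absurd q.2 (not_lt.mpr hh.le)), if_pos ⟨hab.2, hh⟩, min_eq_left hh.le]; ring
        · rw [if_pos ⟨hab.1, hh⟩, if_neg (fun q => absurd q.2 (not_lt.mpr hh.le)), min_eq_right hh.le]; ring
      have B : (if s0 ∈ Ioo a b then u t (ln d τ s0) else 0) +
          (if a ∈ Ioo s0 s1 then 1 else 0) * (1 * u t (ln d τ a)) = u t (ln d τ (max a s0)) := by
        rcases lt_or_gt_of_ne n1.1 with hh | hh
        · rw [if_pos ⟨hh, hab.2⟩, if_neg (fun q => absurd q.1 (not_lt.mpr hh.le)), max_eq_right hh.le]; ring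
        · rw [if_neg (fun q => absurd q.1 (not_lt.mpr hh.le)), if_pos ⟨hh, hab.1⟩, max_eq_left hh.le]; ring
      rw [← A, ← B]; ring
    rw [hD]
    obtain ⟨hc, hdf, _, _⟩ := hu t ht
    have hsub : Ioo (max a s0) (min b s1) ⊆ {s | ln d τ s ∈ t.openHull} := fun s hs =>
      (hmo s).mpr ⟨(le_max_left _ _).trans_lt hs.1, hs.2.trans_le (min_le_left _ _)⟩
    have hsub2 : Ioo (max a s0) (min b s1) ⊆ Ioo s0 s1 := fun s hs =>
      ⟨(le_max_right _ _).trans_lt hs.1, hs.2.trans_le (min_le_right _ _)⟩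
    have heq : ∀ s ∈ Ioo (max a s0) (min b s1), gd u t (ln d τ s) = ‖fderiv ℝ (u t) (ln d τ s)‖ ^ 2 :=
      fun s hs => indicator_of_mem (show ln d τ s ∈ t.openHull from hsub hs) _
    have hIntg : IntegrableOn (fun s => ‖fderiv ℝ (u t) (ln d τ s)‖ ^ 2) (Ioo (max a s0) (min b s1)) :=
      (hI.integrableOn).congr_fun heq measurableSet_Ioo
    have key := ftc_tri w.hd hαβ hc hdf (τ := τ)
      (fun s hs => (hmc s).mpr ⟨(le_max_left _ _).trans hs.1, hs.2.trans (min_le_left _ _)⟩)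
      (fun s hs => hsub hs) hIntg
    refine key.trans ?_
    rw [← setIntegral_congr_fun measurableSet_Ioo heq]
    have hmono : ∫ s in Ioo (max a s0) (min b s1), gd u t (ln d τ s) ≤ ∫ s in Ioo s0 s1, gd u t (ln d τ s) :=
      setIntegral_mono_set hI.integrableOn (ae_of_all _ fun s => gd_nonneg _ _ _)
        (Filter.Eventually.of_forall hsub2)
    have hle : min b s1 - max a s0 ≤ b - a := sub_le_sub (min_le_left _ _) (le_max_left _ _)
    have hn : 0 ≤ ∫ s in Ioo (max a s0) (min b s1), gd u t (ln d τ s) :=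
      integral_nonneg fun s => gd_nonneg _ _ _
    exact mul_le_mul hle hmono hn (by linarith)
  · have h3 : b < s0 ∨ s1 < a := by
      by_contra hcon
      push Not at hcon
      exact hab ⟨lt_of_le_of_ne hcon.2 n1.2, lt_of_le_of_ne hcon.1 n2.1.symm⟩
    have q1 : ¬ (s1 ∈ Ioo a b) := by rintro ⟨p, q⟩; rcases h3 with h3 | h3 <;> linarith
    have q2 : ¬ (s0 ∈ Ioo a b) := by rintro ⟨p, q⟩; rcases h3 with h3 | h3 <;> linarith
    have q3 : ¬ (a ∈ Ioo s0 s1) := by rintro ⟨p, q⟩; rcases h3 with h3 | h3 <;> linarith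
    have q4 : ¬ (b ∈ Ioo s0 s1) := by rintro ⟨p, q⟩; rcases h3 with h3 | h3 <;> linarith
    rw [if_neg q1, if_neg q2, if_neg q3, if_neg q4]
    simpa using hz

def cL (K R0 : ℝ) : ℝ := 4 * R0 + 2 * MM K R0

lemma MM_nonneg (K : ℝ) {R0 : ℝ} (hR : 0 < R0) : 0 ≤ MM K R0 := by
  have := cZ_nonneg K
  have := cO_nonneg K
  unfold MM; positivity

lemma JE_nonneg (d : Pt) (τ s0 s1 : ℝ) (u : Tri → Pt → ℝ) : 0 ≤ JE T d τ s0 s1 u :=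
  pairSum_nonneg T fun _ _ _ _ _ _ _ _ => mul_nonneg (iw_nonneg _ _ _ _ _) (jf_nonneg _ _ _ _ _ _)

lemma line_main {d : Pt} {τ s0 s1 K R0 : ℝ} (w : Win T d τ s0 s1) (hK : T.ShapeRegular K)
    (hR : 0 < R0) (hΩ : Ω ⊆ Metric.ball 0 R0) {u : Tri → Pt → ℝ} (hu : T.PwH1 u)
    (hI : ∀ t ∈ T.tris, Integrable (fun s => gd u t (ln d τ s))) :
    (Vf T u (ln d τ s1) - Vf T u (ln d τ s0)) ^ 2 ≤
      cL K R0 * ((∫ s in Ioo s0 s1, Gf T u (ln d τ s)) + JE T d τ s0 s1 u) := by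
  set Dt : Tri → ℝ := fun t => t.openHull.indicator (u t) (ln d τ s1) -
    t.openHull.indicator (u t) (ln d τ s0)
      + es t (fun e => iw d τ s0 s1 e * (sg d t e * u t (ln d τ (Xc d τ e)))) with hDt
  have hGsum : ∫ s in Ioo s0 s1, Gf T u (ln d τ s) =
      ∑ t ∈ T.tris, ∫ s in Ioo s0 s1, gd u t (ln d τ s) := by
    unfold Gf
    exact integral_finsetSum _ fun t ht => (hI t ht).integrableOn
  have hGn : ∀ t, 0 ≤ ∫ s in Ioo s0 s1, gd u t (ln d τ s) := fun t =>
    integral_nonneg fun s => gd_nonneg _ _ _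
  have hD : (∑ t ∈ T.tris, Dt t) ^ 2 ≤ (2 * R0) * ∫ s in Ioo s0 s1, Gf T u (ln d τ s) := by
    rw [hGsum]
    refine (Finset.sum_sq_le_sum_mul_sum_of_sq_le_mul _ (f := fun t => cl d τ t)
      (g := fun t => ∫ s in Ioo s0 s1, gd u t (ln d τ s)) (fun t _ => measureReal_nonneg)
      (fun t _ => hGn t) (fun t ht => tri_diff T w hu ht (hI t ht))).trans ?_
    exact mul_le_mul_of_nonneg_right (sum_cl T w.hd τ hR hΩ) (Finset.sum_nonneg fun t _ => hGn t)
  have hA := pairing T (fun t e => iw d τ s0 s1 e * (sg d t e * u t (ln d τ (Xc d τ e))))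
    (fun t P Q => by
      by_cases hc : Crs d τ (P, Q)
      · rw [iw_swap, sg_swap, Xc_swap hc]
      · rw [iw_swap d τ s0 s1 P Q]
        have : iw d τ s0 s1 (Q, P) = 0 := by
          unfold iw; rw [if_neg (fun hh => hc ((Crs_swap _ _ _ _).mpr hh.1))]
        rw [this]; ring)
    (fun t ht e he hn => by rw [w.nb ht he hn, zero_mul])
  rw [pairSum_congr T (H := fun t t' e => iw d τ s0 s1 e * (sg d t e *
    (u t (ln d τ (Xc d τ e)) - u t' (ln d τ (Xc d τ e)))))] at hA
  swap
  · intro t ht t' ht' hne e he hs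
    have := iw_sg_nb T (d := d) (τ := τ) (s0 := s0) (s1 := s1) ht ht' hne (sh_self he) hs
    linear_combination (u t' (ln d τ (Xc d τ e))) * this
  have hJ : (∑ t ∈ T.tris, es t (fun e => iw d τ s0 s1 e * (sg d t e * u t (ln d τ (Xc d τ e))))) ^ 2
      ≤ JE T d τ s0 s1 u * MM K R0 := by
    rw [hA]
    refine (pairSum_cs T _ (fun t t' e => iw d τ s0 s1 e * jf d τ u t t' e)
      (fun _ _ e => iw d τ s0 s1 e * |cy d e.2 - cy d e.1|)
      (fun _ _ _ => mul_nonneg (iw_nonneg _ _ _ _ _) (jf_nonneg _ _ _ _ _ _))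
      (fun _ _ _ => mul_nonneg (iw_nonneg _ _ _ _ _) (abs_nonneg _)) ?_).trans ?_
    · intro t t' e
      by_cases hw : Crs d τ e ∧ Xc d τ e ∈ Ioo s0 s1
      · have h1 : 0 < |cy d e.2 - cy d e.1| := abs_pos.mpr hw.1.ne
        have h2 : iw d τ s0 s1 e = 1 := by unfold iw; rw [if_pos hw]
        rw [h2]
        unfold jf
        have h3 : sg d t e ^ 2 = 1 := by rcases sg_or d t e with h | h <;> rw [h] <;> norm_num
        rw [one_mul, one_mul, one_mul, div_mul_cancel₀ _ h1.ne', mul_pow, h3, one_mul]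
      · have h2 : iw d τ s0 s1 e = 0 := by unfold iw; rw [if_neg hw]
        rw [h2]; simp
    · refine mul_le_mul_of_nonneg_left ?_ (JE_nonneg T _ _ _ _ _)
      refine le_trans (pairSum_mono T fun t _ t' _ _ e _ _ => ?_) (count_bound T w hK hR hΩ)
      exact mul_le_mul_of_nonneg_left (abs_cy_le w.hd _ _) (iw_nonneg _ _ _ _ _)
  have hV : Vf T u (ln d τ s1) - Vf T u (ln d τ s0) = ∑ t ∈ T.tris, Dt t -
      ∑ t ∈ T.tris, es t (fun e => iw d τ s0 s1 e * (sg d t e * u t (ln d τ (Xc d τ e)))) := by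
    rw [← Finset.sum_sub_distrib]
    unfold Vf
    rw [← Finset.sum_sub_distrib]
    refine Finset.sum_congr rfl fun t _ => ?_
    rw [hDt]; ring
  rw [hV]
  have hG0 : 0 ≤ ∫ s in Ioo s0 s1, Gf T u (ln d τ s) := integral_nonneg fun s => Gf_nonneg _ _ _
  have hJ0 := JE_nonneg T d τ s0 s1 u
  have hM := MM_nonneg K hR
  set X := ∑ t ∈ T.tris, Dt t
  set Y := ∑ t ∈ T.tris, es t (fun e => iw d τ s0 s1 e * (sg d t e * u t (ln d τ (Xc d τ e))))
  set G := ∫ s in Ioo s0 s1, Gf T u (ln d τ s)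
  set J := JE T d τ s0 s1 u
  have : (X - Y) ^ 2 ≤ 2 * X ^ 2 + 2 * Y ^ 2 := by nlinarith [sq_nonneg (X + Y)]
  unfold cL
  have a1 := mul_nonneg hM hG0
  have a2 := mul_nonneg hR.le hJ0
  linarith
end


lemma ln_mp {d : Pt} (hd : UnitV d) :
    MeasurePreserving (fun p : ℝ × ℝ => ln d p.1 p.2) (volume.prod volume) volume := by
  set M : Matrix (Fin 2) (Fin 2) ℝ := !![-d 1, d 0; d 0, d 1] with hM
  have hdet : M.det = -1 := by
    rw [hM, Matrix.det_fin_two_of]; unfold UnitV at hd; linear_combination -hd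
  have h1 : MeasurePreserving (⇑(Matrix.toLin' M)) volume volume := by
    refine ⟨(Matrix.toLin' M).continuous_of_finiteDimensional.measurable, ?_⟩
    rw [Real.map_matrix_volume_pi_eq_smul_volume_pi (by rw [hdet]; norm_num), hdet]
    norm_num
  have h2 := (PiLp.volume_preserving_toLp (Fin 2)).comp
    (h1.comp (volume_preserving_finTwoArrow ℝ).symm)
  have hfun : (fun p : ℝ × ℝ => ln d p.1 p.2) =
      WithLp.toLp 2 ∘ ⇑(Matrix.toLin' M) ∘ ⇑(MeasurableEquiv.finTwoArrow (α := ℝ)).symm := by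
   funext p
   ext i; fin_cases i
   · show ln d p.1 p.2 0 = _
     rw [ln_zero]
     simp [hM, Matrix.toLin'_apply, Matrix.mulVec, dotProduct, Fin.sum_univ_two,
       MeasurableEquiv.finTwoArrow, MeasurableEquiv.piFinTwo]
     ring
   · show ln d p.1 p.2 1 = _
     rw [ln_one]
     simp [hM, Matrix.toLin'_apply, Matrix.mulVec, dotProduct, Fin.sum_univ_two,
       MeasurableEquiv.finTwoArrow, MeasurableEquiv.piFinTwo]
     ring
  rw [hfun]; exact h2

lemma lint_ln {d : Pt} (hd : UnitV d) {f : Pt → ENNReal} (hf : Measurable f) :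
    ∫⁻ x, f x = ∫⁻ τ, ∫⁻ s, f (ln d τ s) := by
  rw [← (ln_mp hd).lintegral_comp hf]
  exact lintegral_prod _ (hf.comp (ln_mp hd).measurable).aemeasurable

lemma ae_ln {d : Pt} (hd : UnitV d) {p : Pt → Prop} (h : ∀ᵐ x, p x) :
    ∀ᵐ τ, ∀ᵐ s, p (ln d τ s) :=
  Measure.ae_ae_of_ae_prod ((ln_mp hd).quasiMeasurePreserving.ae h)

lemma open_meas (t : Tri) : MeasurableSet t.openHull := isOpen_interior.measurableSet

section
variable {Ω : Set Pt} (T : Triangulation Ω)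

lemma ind_meas {u : Tri → Pt → ℝ} (hu : T.PwH1 u) {t : Tri} (ht : t ∈ T.tris) :
    Measurable (t.openHull.indicator (u t)) := by
  have := ((hu t ht).1.mono interior_subset).measurable_piecewise
    (g := fun _ => (0:ℝ)) continuousOn_const (open_meas t)
  rw [show t.openHull.indicator (u t) = (interior t.closedHull).piecewise (u t) (fun _ => 0) by
    rw [← Set.piecewise_eq_indicator]; rfl]
  exact this

lemma Vf_meas {u : Tri → Pt → ℝ} (hu : T.PwH1 u) : Measurable (Vf T u) := by
  unfold Vf
  exact Finset.measurable_fun_sum _ fun t ht => ind_meas T hu ht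

lemma gd_meas (u : Tri → Pt → ℝ) (t : Tri) : Measurable (gd u t) := by
  unfold gd
  exact ((measurable_fderiv ℝ (u t)).norm.pow_const 2).indicator (open_meas t)

lemma Gf_meas (u : Tri → Pt → ℝ) : Measurable (Gf T u) := by
  unfold Gf
  exact Finset.measurable_fun_sum _ fun t ht => gd_meas u t

lemma gd_int {u : Tri → Pt → ℝ} (hu : T.PwH1 u) {t : Tri} (ht : t ∈ T.tris) :
    Integrable (gd u t) := by
  have := (hu t ht).2.2.2
  unfold gd
  exact (integrable_indicator_iff (open_meas t)).mpr this

lemma Gf_lint {u : Tri → Pt → ℝ} (hu : T.PwH1 u) :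
    ∫⁻ x, ENNReal.ofReal (Gf T u x) = ENNReal.ofReal (T.gradSq u) := by
  rw [← ofReal_integral_eq_lintegral_ofReal (f := Gf T u)
    (integrable_finsetSum _ fun t ht => gd_int T hu ht) (ae_of_all _ fun x => Gf_nonneg T u x)]
  congr 1
  unfold Gf Triangulation.gradSq
  rw [integral_finsetSum _ fun t ht => gd_int T hu ht]
  refine Finset.sum_congr rfl fun t ht => ?_
  unfold gd
  exact integral_indicator (open_meas t)

lemma Vf_eq {u : Tri → Pt → ℝ} {t : Tri} (ht : t ∈ T.tris) {x : Pt} (hx : x ∈ t.openHull) :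
    Vf T u x = u t x := by
  unfold Vf
  rw [Finset.sum_eq_single t]
  · exact indicator_of_mem hx _
  · intro b hb hbt
    refine indicator_of_notMem (fun hxb => ?_) _
    have : x ∈ t.openHull ∩ b.openHull := ⟨hx, hxb⟩
    rw [T.disj t ht b hb hbt.symm] at this
    exact this
  · intro h; exact absurd ht h

lemma Vf_zero {u : Tri → Pt → ℝ} {x : Pt} (hx : ∀ t ∈ T.tris, x ∉ t.openHull) :
    Vf T u x = 0 :=
  Finset.sum_eq_zero fun t ht => indicator_of_notMem (hx t ht) _

lemma Vf_sq (u : Tri → Pt → ℝ) (x : Pt) :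
    Vf T u x ^ 2 = ∑ t ∈ T.tris, t.openHull.indicator (fun x => u t x ^ 2) x := by
  by_cases h : ∃ t ∈ T.tris, x ∈ t.openHull
  · obtain ⟨t, ht, hx⟩ := h
    rw [Vf_eq T ht hx, Finset.sum_eq_single t]
    · rw [indicator_of_mem hx]
    · intro b hb hbt
      refine indicator_of_notMem (fun hxb => ?_) _
      have : x ∈ t.openHull ∩ b.openHull := ⟨hx, hxb⟩
      rw [T.disj t ht b hb hbt.symm] at this
      exact this
    · intro h; exact absurd ht h
  · push Not at h
    rw [Vf_zero T h, Finset.sum_eq_zero fun t ht => indicator_of_notMem (h t ht) _]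
    simp

lemma Vf_lint {u : Tri → Pt → ℝ} (hu : T.PwH1 u) :
    ∫⁻ x, ENNReal.ofReal (Vf T u x ^ 2) = ENNReal.ofReal (T.sqL2 u) := by
  have hi : ∀ t ∈ T.tris, Integrable (t.openHull.indicator (fun x => u t x ^ 2)) := fun t ht =>
    (integrable_indicator_iff (open_meas t)).mpr (hu t ht).2.2.1
  simp_rw [Vf_sq]
  rw [← ofReal_integral_eq_lintegral_ofReal (integrable_finsetSum _ hi)
    (ae_of_all _ fun x => Finset.sum_nonneg fun t ht => indicator_nonneg (fun _ _ => sq_nonneg _) _)]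
  congr 1
  rw [integral_finsetSum _ hi]
  unfold Triangulation.sqL2
  exact Finset.sum_congr rfl fun t ht => integral_indicator (open_meas t)

lemma pairSum_int {G : ℝ → Tri → Tri → Pt × Pt → ℝ}
    (h : ∀ t ∈ T.tris, ∀ t' ∈ T.tris, t ≠ t' → ∀ e ∈ t.edgeList, sh t' e →
      Integrable (fun s => G s t t' e)) :
    Integrable (fun s => pairSum T (G s)) ∧
      ∫ s, pairSum T (G s) = pairSum T (fun t t' e => ∫ s, G s t t' e) := by
  have h1 : ∀ t ∈ T.tris, ∀ t' ∈ T.tris, t ≠ t' → ∀ e ∈ t.edgeList, 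
      Integrable (fun s => if sh t' e then G s t t' e else 0) := by
    intro t ht t' ht' hne e he
    by_cases hs : sh t' e
    · simp only [if_pos hs]; exact h t ht t' ht' hne e he hs
    · simp only [if_neg hs]; exact integrable_zero _ _ _
  have h2 : ∀ t ∈ T.tris, ∀ t' ∈ T.tris, 
      Integrable (fun s => if t ≠ t' then es t (fun e => if sh t' e then G s t t' e else 0) else 0) := by
    intro t ht t' ht'
    by_cases hne : t ≠ t'
    · simp only [if_pos hne, es_eq]
      exact ((h1 t ht t' ht' hne _ (by simp [Tri.edgeList])).add
        (h1 t ht t' ht' hne _ (by simp [Tri.edgeList]))).add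
        (h1 t ht t' ht' hne _ (by simp [Tri.edgeList]))
    · simp only [if_neg hne]; exact integrable_zero _ _ _
  have h3 : ∀ t ∈ T.tris, Integrable (fun s => ∑ t' ∈ T.tris,
      if t ≠ t' then es t (fun e => if sh t' e then G s t t' e else 0) else 0) := fun t ht =>
    integrable_finsetSum _ (h2 t ht)
  refine ⟨(integrable_finsetSum _ h3).const_mul _, ?_⟩
  unfold pairSum
  rw [integral_const_mul, integral_finsetSum _ h3]
  congr 1
  refine Finset.sum_congr rfl fun t ht => ?_
  rw [integral_finsetSum _ (h2 t ht)]
  refine Finset.sum_congr rfl fun t' ht' => ?_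
  by_cases hne : t ≠ t'
  · simp only [if_pos hne, es_eq]
    have a1 := h1 t ht t' ht' hne (t.A, t.B) (by simp [Tri.edgeList])
    have a2 := h1 t ht t' ht' hne (t.B, t.C) (by simp [Tri.edgeList])
    have a3 := h1 t ht t' ht' hne (t.C, t.A) (by simp [Tri.edgeList])
    rw [integral_add (f := fun s => (if sh t' (t.A, t.B) then G s t t' (t.A, t.B) else 0) +
      if sh t' (t.B, t.C) then G s t t' (t.B, t.C) else 0) (a1.add a2) a3, integral_add a1 a2]
    congr 1
    · congr 1
      · by_cases hs : sh t' (t.A, t.B) <;> simp [hs]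
      · by_cases hs : sh t' (t.B, t.C) <;> simp [hs]
    · by_cases hs : sh t' (t.C, t.A) <;> simp [hs]
  · simp [hne]

def ic (d : Pt) (τ : ℝ) (e : Pt × Pt) : ℝ := if Crs d τ e then 1 else 0
def JT (d : Pt) (τ : ℝ) (u : Tri → Pt → ℝ) : ℝ :=
  pairSum T (fun t t' e => ic d τ e * jf d τ u t t' e)

lemma JE_le_JT (d : Pt) (τ s0 s1 : ℝ) (u : Tri → Pt → ℝ) : JE T d τ s0 s1 u ≤ JT T d τ u := by
  refine pairSum_mono T fun t _ t' _ _ e _ _ => mul_le_mul_of_nonneg_right ?_ (jf_nonneg _ _ _ _ _ _)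
  unfold iw ic
  split_ifs with h1 h2 h2
  · exact le_rfl
  · exact absurd h1.1 h2
  · norm_num
  · exact le_rfl

lemma JT_nonneg (d : Pt) (τ : ℝ) (u : Tri → Pt → ℝ) : 0 ≤ JT T d τ u :=
  (JE_nonneg T d τ 0 0 u).trans (JE_le_JT T d τ 0 0 u)

lemma iw_int (d : Pt) (τ : ℝ) {r : ℝ} (hr : 0 < r) (e : Pt × Pt) :
    Integrable (fun s => iw d τ s (s + r) e) ∧ ∫ s, iw d τ s (s + r) e = r * ic d τ e := by
  by_cases h : Crs d τ e
  · have : (fun s => iw d τ s (s + r) e) = (Ioo (Xc d τ e - r) (Xc d τ e)).indicator (fun _ => (1:ℝ)) := by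
      funext s
      unfold iw
      simp only [h, true_and, indicator, mem_Ioo]
      congr 1
      apply propext
      constructor <;> rintro ⟨a, b⟩ <;> constructor <;> linarith
    rw [this]
    constructor
    · exact (integrable_indicator_iff measurableSet_Ioo).mpr (integrableOn_const (by simp))
    · rw [integral_indicator measurableSet_Ioo]
      simp [ic, h, Real.volume_real_Ioo_of_le, hr.le]
  · have : (fun s => iw d τ s (s + r) e) = fun _ => 0 := by
      funext s; unfold iw; simp [h]
    rw [this]; simp [ic, h]

lemma JE_int (d : Pt) (τ : ℝ) {r : ℝ} (hr : 0 < r) (u : Tri → Pt → ℝ) :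
    Integrable (fun s => JE T d τ s (s + r) u) ∧ ∫ s, JE T d τ s (s + r) u = r * JT T d τ u := by
  obtain ⟨h1, h2⟩ := pairSum_int T (G := fun s t t' e => iw d τ s (s + r) e * jf d τ u t t' e)
    (fun t _ t' _ _ e _ _ => (iw_int d τ hr e).1.mul_const _)
  refine ⟨h1, h2.trans ?_⟩
  unfold JT
  rw [show (fun (t t' : Tri) (e : Pt × Pt) => ∫ s, iw d τ s (s + r) e * jf d τ u t t' e) =
    fun t t' e => r * (ic d τ e * jf d τ u t t' e) by
      funext t t' e
      rw [integral_mul_const, (iw_int d τ hr e).2]; ring]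
  unfold pairSum
  rw [mul_left_comm, Finset.mul_sum T.tris _ r]
  congr 1
  refine Finset.sum_congr rfl fun t _ => ?_
  rw [Finset.mul_sum]
  refine Finset.sum_congr rfl fun t' _ => ?_
  by_cases h : t ≠ t'
  · simp only [if_pos h]
    rw [← es_mul]
    refine es_congr fun e _ => ?_
    split_ifs <;> simp
  · simp [h]

lemma seg_sub {t : Tri} {e : Pt × Pt} (h : sh t e) : segment ℝ e.1 e.2 ⊆ t.closedHull := by
  obtain ⟨R, hR⟩ := sh_lab h
  rw [hR.hull]
  exact (convex_convexHull ℝ _).segment_subset (subset_convexHull ℝ _ (by simp))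
    (subset_convexHull ℝ _ (by simp))

lemma jT_int {d : Pt} (hd : UnitV d) {u : Tri → Pt → ℝ} (hu : T.PwH1 u) {t t' : Tri}
    (ht : t ∈ T.tris) (ht' : t' ∈ T.tris) {e : Pt × Pt} (h : sh t e) (h' : sh t' e) :
    Integrable (fun τ => ic d τ e * jf d τ u t t' e) ∧ ∫ τ, ic d τ e * jf d τ u t t' e ≤
      (dist e.1 e.2)⁻¹ * segInt e.1 e.2 (fun x => (u t x - u t' x) ^ 2) := by
  have hdist : 0 < dist e.1 e.2 := by
    obtain ⟨R, hR⟩ := sh_lab h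
    exact dist_pos.mpr (hR.ne (T.nondeg t ht))
  set F : ℝ → ℝ := fun θ => (u t (e.1 + θ • (e.2 - e.1)) - u t' (e.1 + θ • (e.2 - e.1))) ^ 2 with hF
  have hrhs : (dist e.1 e.2)⁻¹ * segInt e.1 e.2 (fun x => (u t x - u t' x) ^ 2) =
      ∫ θ in Ioo (0:ℝ) 1, F θ := by
    unfold segInt
    rw [← mul_assoc, inv_mul_cancel₀ hdist.ne', one_mul, intervalIntegral.integral_of_le zero_le_one,
      integral_Ioc_eq_integral_Ioo]
  have hFn : ∀ θ, 0 ≤ F θ := fun θ => sq_nonneg _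
  rw [hrhs]
  have hline : ContinuousOn (fun θ : ℝ => e.1 + θ • (e.2 - e.1)) (Icc 0 1) := by fun_prop
  have hmaps : ∀ θ ∈ Icc (0:ℝ) 1, e.1 + θ • (e.2 - e.1) ∈ segment ℝ e.1 e.2 := by
    intro θ hθ; rw [segment_eq_image']; exact ⟨θ, hθ, rfl⟩
  have hFc : ContinuousOn F (Icc 0 1) := by
    refine ContinuousOn.pow (ContinuousOn.sub ?_ ?_) 2
    · exact ((hu t ht).1.comp hline (fun θ hθ => seg_sub h (hmaps θ hθ)))
    · exact ((hu t' ht').1.comp hline (fun θ hθ => seg_sub h' (hmaps θ hθ)))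
  have hFi : IntegrableOn F (Ioo 0 1) :=
    (hFc.integrableOn_compact isCompact_Icc).mono_set Ioo_subset_Icc_self
  by_cases hΔ : cy d e.2 - cy d e.1 = 0
  · have hno : ∀ τ, ic d τ e = 0 := fun τ => by
      unfold ic; rw [if_neg (fun hc => hc.ne hΔ)]
    simp only [hno, zero_mul]
    refine ⟨integrable_zero _ _ _, ?_⟩
    simp only [integral_zero]
    exact integral_nonneg hFn
  · set Δ := cy d e.2 - cy d e.1 with hΔd
    have hcr : ∀ τ, Crs d τ e ↔ (τ - cy d e.1) / Δ ∈ Ioo (0:ℝ) 1 := by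
      intro τ
      constructor
      · intro hc; exact th_mem hc
      · rintro ⟨p, q⟩
        set θ := (τ - cy d e.1) / Δ with hθ
        have h1 : τ = cy d e.1 + θ * Δ := by rw [hθ, div_mul_cancel₀ _ hΔ]; ring
        unfold Crs
        rw [show (cy d e.1 - τ) * (cy d e.2 - τ) = - (θ * (1 - θ)) * (Δ * Δ) by
          rw [h1, hΔd]; ring]
        have := mul_pos (mul_pos p (sub_pos.mpr q)) (mul_self_pos.mpr hΔ)
        linarith
    have heq : (fun τ => ic d τ e * jf d τ u t t' e) =
        fun τ => ((Ioo (0:ℝ) 1).indicator F) ((τ - cy d e.1) / Δ) * |Δ|⁻¹ := by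
      funext τ
      by_cases hc : Crs d τ e
      · rw [indicator_of_mem ((hcr τ).mp hc)]
        unfold ic jf
        rw [if_pos hc, ln_Xc hd hc, one_mul, div_eq_mul_inv]
        rfl
      · rw [indicator_of_notMem (fun h => hc ((hcr τ).mpr h))]
        unfold ic
        rw [if_neg hc]; ring
    have hind : Integrable ((Ioo (0:ℝ) 1).indicator F) :=
      (integrable_indicator_iff measurableSet_Ioo).mpr hFi
    rw [heq]
    constructor
    · exact ((hind.comp_div hΔ).comp_sub_right (cy d e.1)).mul_const _
    · rw [integral_mul_const, integral_sub_right_eq_self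
        (fun τ => ((Ioo (0:ℝ) 1).indicator F) (τ / Δ)) (cy d e.1), Measure.integral_comp_div,
        integral_indicator measurableSet_Ioo, smul_eq_mul, mul_comm, ← mul_assoc,
        inv_mul_cancel₀ (abs_pos.mpr hΔ).ne', one_mul]

lemma JT_int {d : Pt} (hd : UnitV d) {u : Tri → Pt → ℝ} (hu : T.PwH1 u) :
    Integrable (fun τ => JT T d τ u) ∧ ∫ τ, JT T d τ u ≤ T.jumpSq u := by
  obtain ⟨h1, h2⟩ := pairSum_int T (G := fun τ t t' e => ic d τ e * jf d τ u t t' e)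
    (fun t ht t' ht' _ e he hs => (jT_int T hd hu ht ht' (sh_self he) hs).1)
  refine ⟨h1, ?_⟩
  rw [jumpSq_eq]
  unfold JT
  rw [h2]
  exact pairSum_mono T fun t ht t' ht' _ e he hs => (jT_int T hd hu ht ht' (sh_self he) hs).2

lemma JT_lint {d : Pt} (hd : UnitV d) {u : Tri → Pt → ℝ} (hu : T.PwH1 u) :
    ∫⁻ τ, ENNReal.ofReal (JT T d τ u) ≤ ENNReal.ofReal (T.jumpSq u) := by
  rw [← ofReal_integral_eq_lintegral_ofReal (JT_int T hd hu).1 (ae_of_all _ fun τ => JT_nonneg T d τ u)]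
  exact ENNReal.ofReal_le_ofReal (JT_int T hd hu).2
end


section
variable {Ω : Set Pt} (T : Triangulation Ω)

def XS (d : Pt) (τ : ℝ) : Set ℝ := ⋃ t ∈ T.tris, {s | s ∈ t.edgeList.map (Xc d τ)}

lemma XS_fin (d : Pt) (τ : ℝ) : (XS T d τ).Finite := by
  unfold XS
  exact Set.Finite.biUnion T.tris.finite_toSet fun t _ => List.finite_toSet _

lemma XS_ne {d : Pt} {τ s : ℝ} (h : s ∉ XS T d τ) {t : Tri} (ht : t ∈ T.tris) {e : Pt × Pt}
    (he : e ∈ t.edgeList) : Xc d τ e ≠ s := by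
  rintro rfl
  exact h (Set.mem_biUnion ht (List.mem_map_of_mem he))

lemma XS_ae (d : Pt) (τ : ℝ) : ∀ᵐ s, s ∉ XS T d τ :=
  (XS_fin T d τ).measure_zero volume |> measure_eq_zero_iff_ae_notMem.mp

lemma XS_ae_add (d : Pt) (τ r : ℝ) : ∀ᵐ s, r + s ∉ XS T d τ :=
  (measurePreserving_add_left volume r).quasiMeasurePreserving.ae (XS_ae T d τ)

structure GoodT (d : Pt) (τ : ℝ) (u : Tri → Pt → ℝ) : Prop where
  gen : ∀ t ∈ T.tris, GenT d τ t
  int : ∀ t ∈ T.tris, Integrable (fun s => gd u t (ln d τ s))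

lemma good_ae {d : Pt} (hd : UnitV d) {u : Tri → Pt → ℝ} (hu : T.PwH1 u) :
    ∀ᵐ τ, GoodT T d τ u := by
  have h1 : ∀ᵐ τ : ℝ, ∀ t ∈ T.tris, GenT d τ t := by
    refine (Filter.eventually_all_finset T.tris).mpr fun t ht => ?_
    filter_upwards [Measure.ae_ne volume (cy d t.A), Measure.ae_ne volume (cy d t.B),
      Measure.ae_ne volume (cy d t.C)] with τ a b c
    exact ⟨a.symm, b.symm, c.symm⟩
  have h2 : ∀ᵐ τ : ℝ, ∀ t ∈ T.tris, Integrable (fun s => gd u t (ln d τ s)) := by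
    refine (Filter.eventually_all_finset T.tris).mpr fun t ht => ?_
    exact ((ln_mp hd).integrable_comp_of_integrable (gd_int T hu ht)).prod_right_ae
  filter_upwards [h1, h2] with τ a b
  exact ⟨a, b⟩

lemma cL_nonneg (K : ℝ) {R0 : ℝ} (hR : 0 < R0) : 0 ≤ cL K R0 := by
  have := MM_nonneg K hR
  unfold cL; positivity

lemma line_lint {d : Pt} {τ s0 s1 K R0 : ℝ} {u : Tri → Pt → ℝ} (g : GoodT T d τ u) (hd : UnitV d)
    (lt : s0 < s1) (sub : ∀ s ∈ Icc s0 s1, ln d τ s ∈ Ω) (n0 : s0 ∉ XS T d τ) (n1 : s1 ∉ XS T d τ)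
    (hK : T.ShapeRegular K) (hR : 0 < R0) (hΩ : Ω ⊆ Metric.ball 0 R0) (hu : T.PwH1 u) :
    ENNReal.ofReal ((Vf T u (ln d τ s1) - Vf T u (ln d τ s0)) ^ 2) ≤
      ENNReal.ofReal (cL K R0) * ((∫⁻ s in Ioo s0 s1, ENNReal.ofReal (Gf T u (ln d τ s))) +
        ENNReal.ofReal (JE T d τ s0 s1 u)) := by
  have w : Win T d τ s0 s1 := ⟨hd, g.gen, lt, sub, fun t ht e he _ =>
    ⟨XS_ne T n0 ht he, XS_ne T n1 ht he⟩⟩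
  have hGi : Integrable (fun s => Gf T u (ln d τ s)) := integrable_finsetSum _ g.int
  have h := line_main T w hK hR hΩ hu g.int
  rw [← ofReal_integral_eq_lintegral_ofReal hGi.integrableOn (ae_of_all _ fun x => Gf_nonneg T u _),
    ← ENNReal.ofReal_add (integral_nonneg fun x => Gf_nonneg T u _) (JE_nonneg T d τ s0 s1 u),
    ← ENNReal.ofReal_mul (cL_nonneg K hR)]
  exact ENNReal.ofReal_le_ofReal h

lemma shift_win {g : ℝ → ENNReal} (s r : ℝ) :
    ∫⁻ s' in Ioo s (s + r), g s' = ∫⁻ σ in Ioo 0 r, g (s + σ) := by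
  have := (measurePreserving_add_left volume s).setLIntegral_comp_preimage_emb
    (measurableEmbedding_addLeft s) g (Ioo s (s + r))
  rw [← this]
  congr 2
  ext x; simp

lemma win_lint {g : ℝ → ENNReal} (hg : Measurable g) (r : ℝ) :
    ∫⁻ s, ∫⁻ s' in Ioo s (s + r), g s' = ENNReal.ofReal r * ∫⁻ s, g s := by
  simp_rw [shift_win]
  rw [lintegral_lintegral_swap]
  · simp_rw [lintegral_add_right_eq_self g]
    simp [mul_comm]
  · exact (hg.comp (measurable_fst.add measurable_snd)).aemeasurable

lemma ln_meas (d : Pt) (τ : ℝ) : Measurable (ln d τ) := (ln_cont d τ).measurable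

lemma grad_lint {d : Pt} (hd : UnitV d) {u : Tri → Pt → ℝ} (hu : T.PwH1 u) :
    ∫⁻ τ, ∫⁻ s, ENNReal.ofReal (Gf T u (ln d τ s)) = ENNReal.ofReal (T.gradSq u) := by
  rw [← Gf_lint T hu, lint_ln hd (Gf_meas T u).ennreal_ofReal]

lemma gradSq_nonneg (u : Tri → Pt → ℝ) : 0 ≤ T.gradSq u :=
  Finset.sum_nonneg fun t _ => integral_nonneg fun x => by positivity
lemma sqL2_nonneg (u : Tri → Pt → ℝ) : 0 ≤ T.sqL2 u :=
  Finset.sum_nonneg fun t _ => integral_nonneg fun x => by positivity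
lemma jumpSq_nonneg (u : Tri → Pt → ℝ) (hu : T.PwH1 u) : 0 ≤ T.jumpSq u := by
  have h := (JT_int T (d := !₂[1, 0]) (by simp [UnitV]) hu).2
  exact (integral_nonneg fun τ => JT_nonneg T _ τ u).trans h

lemma shift_in {d : Pt} (hd : UnitV d) {r K R0 : ℝ} (hr : 0 < r) {u : Tri → Pt → ℝ}
    (hK : T.ShapeRegular K) (hR : 0 < R0) (hΩ : Ω ⊆ Metric.ball 0 R0) (hu : T.PwH1 u)
    {X : Set Pt} (hX : MeasurableSet X) (hsub : ∀ x ∈ X, ∀ a ∈ Icc 0 r, x + a • d ∈ Ω) :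
    ∫⁻ x in X, ENNReal.ofReal ((Vf T u (x + r • d) - Vf T u x) ^ 2) ≤
      ENNReal.ofReal (cL K R0 * r * (T.gradSq u + T.jumpSq u)) := by
  have hV := Vf_meas T hu
  have hc := cL_nonneg K hR
  rw [← lintegral_indicator hX]
  have hm : Measurable (X.indicator fun x => ENNReal.ofReal ((Vf T u (x + r • d) - Vf T u x) ^ 2)) := by
    refine Measurable.indicator ?_ hX
    exact (((hV.comp (measurable_id.add_const _)).sub hV).pow_const 2).ennreal_ofReal
  rw [lint_ln hd hm]
  calc _ ≤ ∫⁻ τ, ENNReal.ofReal (cL K R0) * (ENNReal.ofReal r *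
        (∫⁻ s, ENNReal.ofReal (Gf T u (ln d τ s))) + ENNReal.ofReal r * ENNReal.ofReal (JT T d τ u)) := by
        refine lintegral_mono_ae ?_
        filter_upwards [good_ae T hd hu] with τ hg
        have hJ := JE_int T d τ hr u
        rw [← win_lint (g := fun s => ENNReal.ofReal (Gf T u (ln d τ s)))
            ((Gf_meas T u).comp (ln_meas d τ)).ennreal_ofReal r,
          ← ENNReal.ofReal_mul hr.le, ← hJ.2, ofReal_integral_eq_lintegral_ofReal hJ.1
            (ae_of_all _ fun s => JE_nonneg T d τ s (s + r) u),
          ← lintegral_add_right' _ hJ.1.1.aemeasurable.ennreal_ofReal,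
          ← lintegral_const_mul' _ _ ENNReal.ofReal_ne_top]
        refine lintegral_mono_ae ?_
        filter_upwards [XS_ae T d τ, XS_ae_add T d τ r] with s n0 n1
        by_cases hs : ln d τ s ∈ X
        · rw [indicator_of_mem hs]
          have e1 : ln d τ s + r • d = ln d τ (s + r) := by
            rw [ln_eq d τ s, ln_eq d τ (s + r), add_smul]; abel
          rw [e1]
          refine line_lint T hg hd (by linarith) ?_ n0 (by rwa [add_comm]) hK hR hΩ hu
          intro s' hs'
          have := hsub _ hs (s' - s) ⟨by linarith [hs'.1], by linarith [hs'.2]⟩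
          rwa [ln_eq d τ s, add_assoc, ← add_smul, add_sub_cancel, ← ln_eq] at this
        · rw [indicator_of_notMem hs]; exact bot_le
    _ = ENNReal.ofReal (cL K R0) * (ENNReal.ofReal r * ENNReal.ofReal (T.gradSq u) +
        ENNReal.ofReal r * ∫⁻ τ, ENNReal.ofReal (JT T d τ u)) := by
        rw [lintegral_const_mul' _ _ ENNReal.ofReal_ne_top, lintegral_add_right' _
          ((JT_int T hd hu).1.1.aemeasurable.ennreal_ofReal.const_mul _),
          lintegral_const_mul' _ _ ENNReal.ofReal_ne_top,
          lintegral_const_mul' _ _ ENNReal.ofReal_ne_top, grad_lint T hd hu]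
    _ ≤ ENNReal.ofReal (cL K R0) * (ENNReal.ofReal r * ENNReal.ofReal (T.gradSq u) +
        ENNReal.ofReal r * ENNReal.ofReal (T.jumpSq u)) := by
        gcongr; exact JT_lint T hd hu
    _ = _ := by
        rw [← mul_add, ← ENNReal.ofReal_add (gradSq_nonneg T u) (jumpSq_nonneg T u hu),
          ← ENNReal.ofReal_mul hr.le, ← ENNReal.ofReal_mul hc, mul_assoc]

lemma strip_pt {d : Pt} (hd : UnitV d) {τ s L K R0 : ℝ} {u : Tri → Pt → ℝ} (hL : 0 < L)
    (g : GoodT T d τ u) (n0 : s ∉ XS T d τ) (sub : ∀ s' ∈ Icc s (s + L), ln d τ s' ∈ Ω)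
    (hK : T.ShapeRegular K) (hR : 0 < R0) (hΩ : Ω ⊆ Metric.ball 0 R0) (hu : T.PwH1 u) :
    ENNReal.ofReal L * ENNReal.ofReal (Vf T u (ln d τ s) ^ 2) ≤
      2 * (∫⁻ s', ENNReal.ofReal (Vf T u (ln d τ s') ^ 2)) + ENNReal.ofReal L * (2 *
        ENNReal.ofReal (cL K R0) * ((∫⁻ s, ENNReal.ofReal (Gf T u (ln d τ s))) +
        ENNReal.ofReal (JT T d τ u))) := by
  set c := 2 * ENNReal.ofReal (cL K R0) * ((∫⁻ s, ENNReal.ofReal (Gf T u (ln d τ s))) +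
        ENNReal.ofReal (JT T d τ u)) with hcdef
  have hV := ((Vf_meas T hu).comp (ln_meas d τ)).pow_const 2 |>.ennreal_ofReal
  calc _ = ∫⁻ σ in Ioo 0 L, ENNReal.ofReal (Vf T u (ln d τ s) ^ 2) := by
        simp [mul_comm]
    _ ≤ ∫⁻ σ in Ioo 0 L, (2 * ENNReal.ofReal (Vf T u (ln d τ (s + σ)) ^ 2) + c) := by
        refine setLIntegral_mono_ae' measurableSet_Ioo ?_
        filter_upwards [XS_ae_add T d τ s] with σ n1 hσ
        have h := line_lint T g hd (s0 := s) (s1 := s + σ) (by linarith [hσ.1])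
          (fun s' hs' => sub s' ⟨hs'.1, by linarith [hs'.2, hσ.2]⟩) n0 n1 hK hR hΩ hu
        have h2 : ENNReal.ofReal (Vf T u (ln d τ s) ^ 2) ≤
            2 * ENNReal.ofReal (Vf T u (ln d τ (s + σ)) ^ 2) +
            2 * ENNReal.ofReal ((Vf T u (ln d τ (s + σ)) - Vf T u (ln d τ s)) ^ 2) := by
          rw [← mul_add, ← ENNReal.ofReal_add (sq_nonneg _) (sq_nonneg _),
            ← ENNReal.ofReal_ofNat 2, ← ENNReal.ofReal_mul (by norm_num)]
          refine ENNReal.ofReal_le_ofReal ?_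
          nlinarith [sq_nonneg (2 * Vf T u (ln d τ (s + σ)) - Vf T u (ln d τ s))]
        refine h2.trans ?_
        gcongr
        rw [hcdef, mul_assoc]
        gcongr
        refine h.trans ?_
        gcongr
        · exact Measure.restrict_le_self
        · exact JE_le_JT T d τ _ _ u
    _ = 2 * (∫⁻ σ in Ioo 0 L, ENNReal.ofReal (Vf T u (ln d τ (s + σ)) ^ 2)) + ENNReal.ofReal L * c := by
        rw [lintegral_add_right _ measurable_const, lintegral_const_mul' _ _ (by simp)]
        congr 1
        simp [mul_comm]
    _ ≤ _ := by
        gcongr 2 * ?_ + _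
        rw [← shift_win (g := fun s' => ENNReal.ofReal (Vf T u (ln d τ s') ^ 2))]
        exact setLIntegral_le_lintegral _ _

lemma strip {d : Pt} (hd : UnitV d) {L l K R0 : ℝ} {u : Tri → Pt → ℝ} (hL : 0 < L) (hl : 0 ≤ l)
    (hK : T.ShapeRegular K) (hR : 0 < R0) (hΩ : Ω ⊆ Metric.ball 0 R0) (hu : T.PwH1 u)
    {X : Set Pt} (hX : MeasurableSet X) (hsub : ∀ x ∈ X, ∀ a ∈ Icc 0 L, x + a • d ∈ Ω)
    (hfib : ∀ τ, volume {s | ln d τ s ∈ X} ≤ ENNReal.ofReal l) :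
    ∫⁻ x in X, ENNReal.ofReal (Vf T u x ^ 2) ≤
      ENNReal.ofReal (l * (2 / L * T.sqL2 u + 2 * cL K R0 * (T.gradSq u + T.jumpSq u))) := by
  have hV := Vf_meas T hu
  have hc := cL_nonneg K hR
  have hL' : ENNReal.ofReal L ≠ 0 := by simpa using hL
  have hg0 := gradSq_nonneg T u
  have hj0 := jumpSq_nonneg T u hu
  have hs0 := sqL2_nonneg T u
  set B : ℝ → ENNReal := fun τ => 2 * (∫⁻ s', ENNReal.ofReal (Vf T u (ln d τ s') ^ 2)) +
    ENNReal.ofReal L * (2 * ENNReal.ofReal (cL K R0) *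
      ((∫⁻ s, ENNReal.ofReal (Gf T u (ln d τ s))) + ENNReal.ofReal (JT T d τ u))) with hB
  have key : ENNReal.ofReal L * ∫⁻ x in X, ENNReal.ofReal (Vf T u x ^ 2) ≤
      ENNReal.ofReal (l * (2 * T.sqL2 u + L * (2 * cL K R0 * (T.gradSq u + T.jumpSq u)))) := by
    rw [← lintegral_indicator hX, lint_ln hd ((hV.pow_const 2).ennreal_ofReal.indicator hX),
      ← lintegral_const_mul' _ _ ENNReal.ofReal_ne_top]
    calc _ ≤ ∫⁻ τ, B τ * ENNReal.ofReal l := by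
          refine lintegral_mono_ae ?_
          filter_upwards [good_ae T hd hu] with τ hg
          have hF : MeasurableSet {s | ln d τ s ∈ X} := ln_meas d τ hX
          calc _ ≤ ∫⁻ s, {s | ln d τ s ∈ X}.indicator (fun _ => B τ) s := by
                rw [← lintegral_const_mul' _ _ ENNReal.ofReal_ne_top]
                refine lintegral_mono_ae ?_
                filter_upwards [XS_ae T d τ] with s n0
                by_cases hs : ln d τ s ∈ X
                · rw [indicator_of_mem hs, indicator_of_mem (by exact hs)]
                  refine strip_pt T hd hL hg n0 ?_ hK hR hΩ hu
                  intro s' hs'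
                  have := hsub _ hs (s' - s) ⟨by linarith [hs'.1], by linarith [hs'.2]⟩
                  rwa [ln_eq d τ s, add_assoc, ← add_smul, add_sub_cancel, ← ln_eq] at this
                · rw [indicator_of_notMem hs]; simp
            _ = B τ * volume {s | ln d τ s ∈ X} := by
                rw [lintegral_indicator hF]; simp
            _ ≤ _ := by gcongr; exact hfib τ
      _ = (2 * ENNReal.ofReal (T.sqL2 u) + ENNReal.ofReal L * (2 * ENNReal.ofReal (cL K R0) *
          (ENNReal.ofReal (T.gradSq u) + ∫⁻ τ, ENNReal.ofReal (JT T d τ u)))) * ENNReal.ofReal l := by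
          have m1 : AEMeasurable (fun τ => ENNReal.ofReal (JT T d τ u)) :=
            (JT_int T hd hu).1.1.aemeasurable.ennreal_ofReal
          have m2 : Measurable fun τ => ∫⁻ s', ENNReal.ofReal (Vf T u (ln d τ s') ^ 2) := by
            apply Measurable.lintegral_prod_right'
              (f := fun p : ℝ × ℝ => ENNReal.ofReal (Vf T u (ln d p.1 p.2) ^ 2))
            exact ((hV.comp (ln_mp hd).measurable).pow_const 2).ennreal_ofReal
          rw [lintegral_mul_const' _ _ ENNReal.ofReal_ne_top, hB, lintegral_add_left (m2.const_mul _),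
            lintegral_const_mul' _ _ (by simp), lintegral_const_mul' _ _ ENNReal.ofReal_ne_top,
            lintegral_const_mul' _ _ (by finiteness), lintegral_add_right' _ m1, grad_lint T hd hu,
            ← lint_ln hd (f := fun x => ENNReal.ofReal (Vf T u x ^ 2))
              (hV.pow_const 2).ennreal_ofReal, Vf_lint T hu]
      _ ≤ (2 * ENNReal.ofReal (T.sqL2 u) + ENNReal.ofReal L * (2 * ENNReal.ofReal (cL K R0) *
          (ENNReal.ofReal (T.gradSq u) + ENNReal.ofReal (T.jumpSq u)))) * ENNReal.ofReal l := by
          gcongr; exact JT_lint T hd hu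
      _ = _ := by
          rw [← ENNReal.ofReal_add hg0 hj0, ← ENNReal.ofReal_ofNat 2,
            ← ENNReal.ofReal_mul (by norm_num), ← ENNReal.ofReal_mul (by norm_num),
            ← ENNReal.ofReal_mul (by positivity), ← ENNReal.ofReal_mul (by positivity),
            ← ENNReal.ofReal_add (by positivity) (by positivity),
            ← ENNReal.ofReal_mul (by positivity), mul_comm l]
  have h2 : l * (2 * T.sqL2 u + L * (2 * cL K R0 * (T.gradSq u + T.jumpSq u))) =
      L * (l * (2 / L * T.sqL2 u + 2 * cL K R0 * (T.gradSq u + T.jumpSq u))) := by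
    field_simp
  rw [h2, ENNReal.ofReal_mul hL.le] at key
  exact (ENNReal.mul_le_mul_iff_right hL' ENNReal.ofReal_ne_top).mp key
end


def Ctrl (Ω : Set Pt) (K : ℝ) (X : ℝ → Set Pt) : Prop :=
  ∃ C : ℝ, 0 ≤ C ∧ ∀ T : Triangulation Ω, T.ShapeRegular K → ∀ u : Tri → Pt → ℝ, T.PwH1 u →
    ∀ r : ℝ, 0 < r → ∫⁻ x in X r, ENNReal.ofReal (Vf T u x ^ 2) ≤ ENNReal.ofReal (C * r * T.normSq u)

lemma normSq_nonneg {Ω : Set Pt} (T : Triangulation Ω) {u : Tri → Pt → ℝ} (hu : T.PwH1 u) :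
    0 ≤ T.normSq u :=
  add_nonneg (add_nonneg (sqL2_nonneg T u) (gradSq_nonneg T u)) (jumpSq_nonneg T u hu)

lemma Ctrl.mono {Ω : Set Pt} {K : ℝ} {X Y : ℝ → Set Pt} (h : Ctrl Ω K Y)
    (hs : ∀ r, 0 < r → X r ⊆ Y r) : Ctrl Ω K X := by
  obtain ⟨C, hC, h⟩ := h
  exact ⟨C, hC, fun T hK u hu r hr => (lintegral_mono_set (hs r hr)).trans (h T hK u hu r hr)⟩

lemma Ctrl.null {Ω : Set Pt} {K : ℝ} {N : Set Pt} (h : volume N = 0) : Ctrl Ω K (fun _ => N) := by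
  refine ⟨0, le_rfl, fun T hK u hu r hr => ?_⟩
  rw [setLIntegral_measure_zero _ _ h]; exact bot_le

lemma Ctrl.union {Ω : Set Pt} {K : ℝ} {X Y : ℝ → Set Pt} (h : Ctrl Ω K X) (h' : Ctrl Ω K Y) :
    Ctrl Ω K (fun r => X r ∪ Y r) := by
  obtain ⟨C, hC, h⟩ := h
  obtain ⟨D, hD, h'⟩ := h'
  refine ⟨C + D, add_nonneg hC hD, fun T hK u hu r hr => ?_⟩
  have hn := normSq_nonneg T hu
  refine (lintegral_union_le _ _ _).trans ((add_le_add (h T hK u hu r hr) (h' T hK u hu r hr)).trans ?_)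
  rw [← ENNReal.ofReal_add (by positivity) (by positivity)]
  exact ENNReal.ofReal_le_ofReal (by linarith [mul_nonneg hr.le hn])

lemma Ctrl.biUnion {Ω : Set Pt} {K : ℝ} {ι : Type*} (s : Finset ι) {X : ι → ℝ → Set Pt}
    (h : ∀ i ∈ s, Ctrl Ω K (X i)) : Ctrl Ω K (fun r => ⋃ i ∈ s, X i r) := by
  induction s using Finset.induction_on with
  | empty => simpa using Ctrl.null (Ω := Ω) (K := K) (N := ∅) (by simp)
  | insert a s ha ih =>
    refine ((h a (by simp)).union (ih fun i hi => h i (by simp [hi]))).mono fun r _ => ?_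
    simp

/-- part of `t` near vertex `P`, near the line through `e` -/
def Pc (P Q R : Pt) (t : Tri) (e : Pt × Pt) (r : ℝ) : Set Pt :=
  {x | x ∈ t.openHull ∧ 1 / 3 * (orient P Q R * orient P Q R) ≤ orient Q R x * orient P Q R ∧
    |orient e.1 e.2 x| ≤ (|e.2 0 - e.1 0| + |e.2 1 - e.1 1|) * r}

lemma orient_ln0 (P Q d : Pt) (τ s : ℝ) : orient P Q (ln d τ s) =
    orient P Q (ln d τ 0) + s * ((Q 0 - P 0) * d 1 - (Q 1 - P 1) * d 0) := by
  unfold orient; simp only [ln_zero, ln_one]; ring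

lemma fib_vol (a k m : ℝ) (hk : k ≠ 0) :
    volume {s : ℝ | |a + s * k| ≤ m} ≤ ENNReal.ofReal (2 * m / |k|) := by
  have hk' := abs_pos.mpr hk
  have : {s : ℝ | |a + s * k| ≤ m} ⊆ Icc (-a / k - m / |k|) (-a / k + m / |k|) := by
    intro s hs
    have h1 : |s - -a / k| ≤ m / |k| := by
      rw [le_div_iff₀ hk', ← abs_mul]
      rwa [show (s - -a / k) * k = a + s * k by field_simp; ring]
    rw [abs_le] at h1
    constructor <;> linarith [h1.1, h1.2]
  refine (measure_mono this).trans ?_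
  rw [Real.volume_Icc]
  exact ENNReal.ofReal_le_ofReal (le_of_eq (by ring))

lemma Pc_meas (P Q R : Pt) (t : Tri) (e : Pt × Pt) (r : ℝ) : MeasurableSet (Pc P Q R t e r) := by
  unfold Pc
  refine (open_meas t).inter (MeasurableSet.inter ?_ ?_)
  · exact measurableSet_le measurable_const ((orient_cont Q R).measurable.mul_const _)
  · exact measurableSet_le (orient_cont _ _).abs.measurable measurable_const

lemma Pc_ctrl1 {Ω : Set Pt} {K R0 : ℝ} (hR : 0 < R0) (hΩ : Ω ⊆ Metric.ball 0 R0) {t : Tri}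
    (ht : t.Nondeg) (hsub : t.openHull ⊆ Ω) {P Q R : Pt} (hL : Lab t P Q R) {e : Pt × Pt}
    (hk : (e.2 0 - e.1 0) * (Q 1 - P 1) - (e.2 1 - e.1 1) * (Q 0 - P 0) ≠ 0) :
    Ctrl Ω K (Pc P Q R t e) := by
  have hPQ : 0 < dist P Q := dist_pos.mpr (hL.ne ht)
  set D := dist P Q with hD
  have hD2 : D ^ 2 = (Q 0 - P 0) ^ 2 + (Q 1 - P 1) ^ 2 := by
    rw [hD, EuclideanSpace.dist_eq, Real.sq_sqrt (by positivity)]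
    simp only [Fin.sum_univ_two, Real.dist_eq, sq_abs]; ring
  set d : Pt := D⁻¹ • (Q - P) with hd
  have d0 : d 0 = D⁻¹ * (Q 0 - P 0) := by simp [hd]
  have d1 : d 1 = D⁻¹ * (Q 1 - P 1) := by simp [hd]
  have hu1 : UnitV d := by
    unfold UnitV; rw [d0, d1, mul_pow, mul_pow, ← mul_add, ← hD2]; field_simp
  set k := (e.2 0 - e.1 0) * d 1 - (e.2 1 - e.1 1) * d 0 with hkd
  have hk0 : k ≠ 0 := by
    rw [hkd, d0, d1]
    have := mul_ne_zero (inv_ne_zero hPQ.ne') hk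
    intro h; apply this; linarith
  have hk1 := abs_pos.mpr hk0
  set m := |e.2 0 - e.1 0| + |e.2 1 - e.1 1| with hm
  have hm0 : 0 ≤ m := by positivity
  have hc := cL_nonneg K hR
  refine ⟨2 * m / |k| * (2 / (D / 4) + 2 * cL K R0), by positivity, fun T hK u hu r hr => ?_⟩
  have := strip T hu1 (L := D / 4) (l := 2 * (m * r) / |k|) (by positivity) (by positivity) hK hR hΩ hu
    (X := Pc P Q R t e r) (Pc_meas _ _ _ _ _ _) ?_ ?_
  · refine this.trans (ENNReal.ofReal_le_ofReal ?_)
    have hg0 := gradSq_nonneg T u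
    have hj0 := jumpSq_nonneg T u hu
    have hs0 := sqL2_nonneg T u
    rw [show 2 * m / |k| * (2 / (D / 4) + 2 * cL K R0) * r * T.normSq u =
      2 * (m * r) / |k| * ((2 / (D / 4) + 2 * cL K R0) * T.normSq u) by ring]
    refine mul_le_mul_of_nonneg_left ?_ (by positivity)
    unfold Triangulation.normSq
    have a1 : 0 ≤ 2 / (D / 4) * (T.gradSq u + T.jumpSq u) := by positivity
    have a2 : 0 ≤ 2 * cL K R0 * T.sqL2 u := by positivity
    linarith
  · intro x hx a ha
    apply hsub
    rw [hL.mem_open ht]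
    obtain ⟨h1, h2, h3⟩ := hx
    rw [hL.mem_open ht] at h1
    obtain ⟨p1, p2, p3⟩ := h1
    set o := orient P Q R with ho
    have hoo : 0 < o * o := mul_self_pos.mpr (hL.orient_ne ht)
    set b := a * D⁻¹ with hb
    have hb0 : 0 ≤ b := mul_nonneg ha.1 (by positivity)
    have hb1 : b ≤ 1 / 4 := by
      rw [hb, ← div_eq_mul_inv, div_le_iff₀ hPQ]; linarith [ha.2]
    have y0 : (x + a • d) 0 = x 0 + b * (Q 0 - P 0) := by simp [d0, hb]; ring
    have y1 : (x + a • d) 1 = x 1 + b * (Q 1 - P 1) := by simp [d1, hb]; ring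
    have e1 : orient P Q (x + a • d) = orient P Q x := by
      unfold orient; rw [y0, y1]; ring
    have e2 : orient Q R (x + a • d) = orient Q R x - b * o := by
      rw [ho]; unfold orient; rw [y0, y1]; ring
    have e3 : orient R P (x + a • d) = orient R P x + b * o := by
      rw [ho]; unfold orient; rw [y0, y1]; ring
    rw [e1, e2, e3]
    refine ⟨p1, ?_, ?_⟩
    · have h5 := mul_le_mul_of_nonneg_right hb1 hoo.le
      rw [sub_mul, mul_assoc]
      linarith
    · have h5 := mul_nonneg hb0 hoo.le
      rw [add_mul, mul_assoc]
      linarith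
  · intro τ
    refine le_trans (measure_mono ?_) (fib_vol (orient e.1 e.2 (ln d τ 0)) k (m * r) hk0)
    intro s hs
    have := hs.2.2
    rw [orient_ln0] at this
    exact this

lemma Pc_ctrl {Ω : Set Pt} {K R0 : ℝ} (hR : 0 < R0) (hΩ : Ω ⊆ Metric.ball 0 R0) {t : Tri}
    (ht : t.Nondeg) (hsub : t.openHull ⊆ Ω) {P Q R : Pt} (hL : Lab t P Q R) {e : Pt × Pt}
    (he : e.1 ≠ e.2) :
    Ctrl Ω K (Pc P Q R t e) := by
  by_cases hk : (e.2 0 - e.1 0) * (Q 1 - P 1) - (e.2 1 - e.1 1) * (Q 0 - P 0) ≠ 0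
  · exact Pc_ctrl1 hR hΩ ht hsub hL hk
  · push Not at hk
    have hk2 : (e.2 0 - e.1 0) * (R 1 - P 1) - (e.2 1 - e.1 1) * (R 0 - P 0) ≠ 0 := by
      intro hk2
      have ho := hL.orient_ne ht
      apply he
      have h0 : (e.2 0 - e.1 0) * orient P Q R = 0 := by
        unfold orient
        linear_combination (Q 0 - P 0) * hk2 - (R 0 - P 0) * hk
      have h1 : (e.2 1 - e.1 1) * orient P Q R = 0 := by
        unfold orient
        linear_combination (Q 1 - P 1) * hk2 - (R 1 - P 1) * hk
      have h0' := (mul_eq_zero.mp h0).resolve_right ho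
      have h1' := (mul_eq_zero.mp h1).resolve_right ho
      ext i; fin_cases i
      · show e.1 0 = e.2 0
        linarith
      · show e.1 1 = e.2 1
        linarith
    refine (Pc_ctrl1 hR hΩ ht hsub hL.flip hk2).mono fun r _ => ?_
    rintro x ⟨h1, h2, h3⟩
    refine ⟨h1, ?_, h3⟩
    have e1 : orient P R Q = - orient P Q R := by unfold orient; ring
    have e2 : orient R Q x = - orient Q R x := by unfold orient; ring
    rw [e1, e2]; linarith

lemma orient_lip (P Q x y : Pt) {r : ℝ} (h : dist x y ≤ r) (hy : orient P Q y = 0) :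
    |orient P Q x| ≤ (|Q 0 - P 0| + |Q 1 - P 1|) * r := by
  have hi : ∀ i, |x i - y i| ≤ r := fun i => by
    rw [dist_eq_norm] at h
    exact (PiLp.norm_apply_le (x - y) i).trans h
  have : orient P Q x = (Q 0 - P 0) * (x 1 - y 1) - (Q 1 - P 1) * (x 0 - y 0) := by
    rw [← sub_zero (orient P Q x), ← hy]; unfold orient; ring
  rw [this, add_mul]
  refine (abs_sub _ _).trans ?_
  rw [abs_mul, abs_mul]
  gcongr
  · exact hi 1
  · exact hi 0

lemma closed_hull_closed (t : Tri) : IsCompact t.closedHull :=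
  (Set.toFinite _).isCompact_convexHull ℝ

lemma union_closed (S : Finset Tri) : IsClosed (⋃ t ∈ S, t.closedHull) :=
  Set.Finite.isClosed_biUnion S.finite_toSet fun t _ => (closed_hull_closed t).isClosed

lemma lab0 (t : Tri) : Lab t t.A t.B t.C := Or.inl ⟨rfl, rfl, rfl⟩

lemma fr_line {S : Finset Tri} (hS : ∀ t ∈ S, t.Nondeg) {y : Pt}
    (hy : y ∈ frontier (interior (⋃ t ∈ S, t.closedHull))) :
    ∃ t ∈ S, ∃ e ∈ t.edgeList, orient e.1 e.2 y = 0 := by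
  rw [frontier, interior_interior] at hy
  have hyU : y ∈ ⋃ t ∈ S, t.closedHull := by
    have := closure_mono interior_subset hy.1
    rwa [(union_closed S).closure_eq] at this
  obtain ⟨t, ht, hyt⟩ := mem_iUnion₂.mp hyU
  have hno : y ∉ t.openHull := fun h => hy.2
    (interior_mono (subset_biUnion_of_mem (u := fun t : Tri => t.closedHull) ht) h)
  refine ⟨t, ht, ?_⟩
  by_contra hcon
  push Not at hcon
  apply hno
  rw [(lab0 t).mem_open (hS t ht)]
  rw [(lab0 t).mem_closed (hS t ht)] at hyt
  have ho := (lab0 t).orient_ne (hS t ht)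
  have c1 := hcon (t.A, t.B) (by simp [Tri.edgeList])
  have c2 := hcon (t.B, t.C) (by simp [Tri.edgeList])
  have c3 := hcon (t.C, t.A) (by simp [Tri.edgeList])
  exact ⟨lt_of_le_of_ne hyt.1 (mul_ne_zero c1 ho).symm,
    lt_of_le_of_ne hyt.2.1 (mul_ne_zero c2 ho).symm,
    lt_of_le_of_ne hyt.2.2 (mul_ne_zero c3 ho).symm⟩

def Nul (S : Finset Tri) : Set Pt := ⋃ t ∈ S, frontier t.closedHull

lemma Nul_null (S : Finset Tri) : volume (Nul S) = 0 :=
  (measure_biUnion_null_iff S.countable_toSet).mpr fun _ _ =>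
    (convex_convexHull ℝ _).addHaar_frontier volume

lemma mem_tri {S : Finset Tri} {x : Pt} (hx : x ∈ interior (⋃ t ∈ S, t.closedHull))
    (hn : x ∉ Nul S) : ∃ t ∈ S, x ∈ t.openHull := by
  obtain ⟨t, ht, hxt⟩ := mem_iUnion₂.mp (interior_subset hx)
  refine ⟨t, ht, ?_⟩
  by_contra h
  exact hn (mem_biUnion ht ⟨subset_closure hxt, h⟩)

def Bad (Ω : Set Pt) (r : ℝ) : Set Pt := Ω ∩ Metric.cthickening r (frontier Ω)

lemma edge_ne {t : Tri} (ht : t.Nondeg) {e : Pt × Pt} (he : e ∈ t.edgeList) : e.1 ≠ e.2 := by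
  have := lab0 t
  simp only [Tri.edgeList, List.mem_cons, List.not_mem_nil, or_false] at he
  rcases he with rfl | rfl | rfl
  · exact this.ne ht
  · exact this.rot.ne ht
  · exact this.rot.rot.ne ht

lemma Bad_ctrl {Ω : Set Pt} {K R0 : ℝ} (hR : 0 < R0) (hΩ : Ω ⊆ Metric.ball 0 R0) {S : Finset Tri}
    (hS : ∀ t ∈ S, t.Nondeg) (hΩS : Ω = interior (⋃ t ∈ S, t.closedHull)) :
    Ctrl Ω K (Bad Ω) := by
  have hsub : ∀ t ∈ S, t.openHull ⊆ Ω := fun t ht => by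
    rw [hΩS]; exact interior_mono (subset_biUnion_of_mem (u := fun t : Tri => t.closedHull) ht)
  have big : Ctrl Ω K (fun r => (⋃ t ∈ S, ⋃ t' ∈ S, ⋃ e ∈ t'.edgeList.toFinset,
      ((Pc t.A t.B t.C t e r ∪ Pc t.B t.C t.A t e r) ∪ Pc t.C t.A t.B t e r)) ∪ Nul S) := by
    refine Ctrl.union ?_ (Ctrl.null (Nul_null S))
    refine Ctrl.biUnion S fun t ht => Ctrl.biUnion S fun t' ht' => Ctrl.biUnion _ fun e he => ?_
    have he' := edge_ne (hS t' ht') (List.mem_toFinset.mp he)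
    exact ((Pc_ctrl hR hΩ (hS t ht) (hsub t ht) (lab0 t) he').union
      (Pc_ctrl hR hΩ (hS t ht) (hsub t ht) (lab0 t).rot he')).union
      (Pc_ctrl hR hΩ (hS t ht) (hsub t ht) (lab0 t).rot.rot he')
  refine big.mono fun r hr => ?_
  rintro x ⟨hx, hxf⟩
  by_cases hn : x ∈ Nul S
  · exact Or.inr hn
  left
  have hb : Bornology.IsBounded (frontier Ω) :=
    (Metric.isBounded_ball.subset hΩ).closure.subset frontier_subset_closure
  have hcf : IsCompact (frontier Ω) := Metric.isCompact_of_isClosed_isBounded isClosed_frontier hb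
  rw [hcf.cthickening_eq_biUnion_closedBall hr.le] at hxf
  obtain ⟨y, hy, hxy⟩ := mem_iUnion₂.mp hxf
  rw [hΩS] at hy
  obtain ⟨t', ht', e, he, hey⟩ := fr_line hS hy
  obtain ⟨t, ht, hxt⟩ := mem_tri (S := S) (by rwa [← hΩS]) hn
  refine mem_biUnion ht (mem_biUnion ht' (mem_biUnion (List.mem_toFinset.mpr he) ?_))
  have hl := orient_lip e.1 e.2 x y (Metric.mem_closedBall.mp hxy) hey
  have hsum := orient_sum t.A t.B t.C x
  set o := orient t.A t.B t.C with ho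
  have o2 : orient t.B t.C t.A = o := by rw [ho]; unfold orient; ring
  have o3 : orient t.C t.A t.B = o := by rw [ho]; unfold orient; ring
  have hs2 : orient t.A t.B x * o + orient t.B t.C x * o + orient t.C t.A x * o = o * o := by
    rw [← hsum]; ring
  by_cases h1 : 1 / 3 * (o * o) ≤ orient t.B t.C x * o
  · exact Or.inl (Or.inl ⟨hxt, h1, hl⟩)
  by_cases h2 : 1 / 3 * (o * o) ≤ orient t.C t.A x * o
  · exact Or.inl (Or.inr ⟨hxt, by rw [o2]; exact h2, hl⟩)
  · exact Or.inr ⟨hxt, by rw [o3]; linarith, hl⟩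

lemma seg_bad {Ω : Set Pt} (ho : IsOpen Ω) {x y : Pt} (hx : x ∈ Ω) (h : ¬ segment ℝ x y ⊆ Ω) {r : ℝ}
    (hr : dist x y ≤ r) : x ∈ Bad Ω r := by
  obtain ⟨z, hz, hzΩ⟩ := not_subset.mp h
  have hf : (segment ℝ x y ∩ frontier Ω).Nonempty := by
    by_contra hcon
    rw [not_nonempty_iff_eq_empty] at hcon
    have hpre : IsPreconnected (segment ℝ x y) := (convex_segment x y).isPreconnected
    have hcl : ∀ w ∈ segment ℝ x y, w ∈ closure Ω → w ∈ Ω := by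
      intro w hw hwc
      by_contra hwn
      have : w ∈ segment ℝ x y ∩ frontier Ω := ⟨hw, hwc, by rwa [ho.interior_eq]⟩
      rw [hcon] at this; exact this
    obtain ⟨w, hw, hw1, hw2⟩ := hpre Ω (closure Ω)ᶜ ho isClosed_closure.isOpen_compl
      (fun w hw => by
        by_cases hwc : w ∈ closure Ω
        · exact Or.inl (hcl w hw hwc)
        · exact Or.inr hwc)
      ⟨x, left_mem_segment ℝ x y, hx⟩ ⟨z, hz, fun hc => hzΩ (hcl z hz hc)⟩
    exact hw2 (subset_closure hw1)
  obtain ⟨w, hw, hwf⟩ := hf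
  refine ⟨hx, Metric.mem_cthickening_of_dist_le x w r _ hwf ?_⟩
  have := dist_add_dist_of_mem_segment hw
  linarith [dist_nonneg (x := w) (y := y)]

lemma seg_set_open {Ω : Set Pt} (ho : IsOpen Ω) (ρ : Pt) :
    IsOpen {x | segment ℝ x (x + ρ) ⊆ Ω} := by
  have hK : IsCompact (Set.image (fun a : ℝ => -(a • ρ)) (Icc 0 1)) :=
    isCompact_Icc.image (by fun_prop)
  have hc := ho.isClosed_compl.add_right_of_isCompact hK
  rw [← isClosed_compl_iff]
  convert hc using 1
  ext x
  simp only [mem_compl_iff, Set.mem_add]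
  constructor
  · intro h
    obtain ⟨z, hz, hzn⟩ := not_subset.mp h
    rw [segment_eq_image'] at hz
    obtain ⟨a, ha, rfl⟩ := hz
    refine ⟨_, hzn, _, ⟨a, ha, rfl⟩, ?_⟩
    simp
  · rintro ⟨z, hz, _, ⟨a, ha, rfl⟩, rfl⟩ h
    apply hz
    apply h
    rw [segment_eq_image']
    exact ⟨a, ha, by simp⟩

lemma glue_ae {Ω : Set Pt} (T : Triangulation Ω) {u : Tri → Pt → ℝ} {v : Pt → ℝ}
    (hg : T.Glues u v) : v =ᵐ[volume] Vf T u := by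
  filter_upwards [measure_eq_zero_iff_ae_notMem.mp (Nul_null T.tris)] with x hx
  by_cases hxΩ : x ∈ Ω
  · obtain ⟨t, ht, hxt⟩ := mem_tri (S := T.tris) (by rwa [← T.cover]) hx
    rw [Vf_eq T ht hxt, hg.1 t ht x hxt]
  · rw [hg.2 x hxΩ, Vf_zero T fun t ht h => hxΩ (tri_open_sub T ht h)]

lemma sq_two (a b : ℝ) : ENNReal.ofReal ((a - b) ^ 2) ≤
    2 * (ENNReal.ofReal (a ^ 2) + ENNReal.ofReal (b ^ 2)) := by
  rw [← ENNReal.ofReal_add (sq_nonneg _) (sq_nonneg _),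
    ← ENNReal.ofReal_ofNat 2, ← ENNReal.ofReal_mul (by norm_num)]
  refine ENNReal.ofReal_le_ofReal ?_
  nlinarith [sq_nonneg (a + b)]

lemma main_lint {Ω : Set Pt} {K R0 Cb : ℝ} (hR : 0 < R0) (hΩ : Ω ⊆ Metric.ball 0 R0) (hCb : 0 ≤ Cb)
    (T : Triangulation Ω) (hK : T.ShapeRegular K) {u : Tri → Pt → ℝ} (hu : T.PwH1 u) {ρ : Pt}
    (hρ : 0 < ‖ρ‖)
    (hb : ∫⁻ x in Bad Ω ‖ρ‖, ENNReal.ofReal (Vf T u x ^ 2) ≤ ENNReal.ofReal (Cb * ‖ρ‖ * T.normSq u)) :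
    ∫⁻ x, ENNReal.ofReal ((Vf T u (x + ρ) - Vf T u x) ^ 2) ≤
      ENNReal.ofReal ((cL K R0 + 4 * Cb + 1) * ‖ρ‖ * T.normSq u) := by
  have ho := Om_open T
  have hV := Vf_meas T hu
  have hc := cL_nonneg K hR
  have hn := normSq_nonneg T hu
  set r := ‖ρ‖ with hr
  set d : Pt := r⁻¹ • ρ with hd
  have hrd : r • d = ρ := by rw [hd, smul_smul, mul_inv_cancel₀ hρ.ne', one_smul]
  have hud : UnitV d := by
    have h1 : ‖d‖ = 1 := by rw [hd, norm_smul, norm_inv, norm_norm, inv_mul_cancel₀ hρ.ne']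
    rw [EuclideanSpace.norm_eq, Real.sqrt_eq_one] at h1
    simp only [Fin.sum_univ_two, Real.norm_eq_abs, sq_abs] at h1
    exact h1
  have hBm : MeasurableSet (Bad Ω r) := ho.measurableSet.inter Metric.isClosed_cthickening.measurableSet
  set X := {x | segment ℝ x (x + ρ) ⊆ Ω} with hX
  have hXm : MeasurableSet X := (seg_set_open ho ρ).measurableSet
  set W : Pt → ENNReal := (Bad Ω r).indicator fun x => ENNReal.ofReal (Vf T u x ^ 2) with hW
  have hWm : Measurable W := (hV.pow_const 2).ennreal_ofReal.indicator hBm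
  have hWi : ∫⁻ x, W x ≤ ENNReal.ofReal (Cb * r * T.normSq u) := by
    rw [hW, lintegral_indicator hBm]; exact hb
  have h1 := shift_in T hud hρ hK hR hΩ hu hXm (by
    intro x hx a ha
    apply hx
    rw [segment_eq_image']
    refine ⟨a / r, ⟨div_nonneg ha.1 hρ.le, (div_le_one hρ).mpr ha.2⟩, ?_⟩
    simp only [add_sub_cancel_left, hd, smul_smul, div_eq_mul_inv])
  rw [hrd] at h1
  have hWx : ∀ x, (x ∈ Ω → x ∈ Bad Ω r) → ENNReal.ofReal (Vf T u x ^ 2) ≤ W x := by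
    intro x hx
    by_cases hxΩ : x ∈ Ω
    · rw [hW, indicator_of_mem (hx hxΩ)]
    · rw [Vf_zero T fun t ht h => hxΩ (tri_open_sub T ht h)]; simp
  have h2 : ∫⁻ x in Xᶜ, ENNReal.ofReal ((Vf T u (x + ρ) - Vf T u x) ^ 2) ≤
      ∫⁻ x, (2 * W (x + ρ) + 2 * W x) := by
    refine le_trans ?_ (setLIntegral_le_lintegral Xᶜ _)
    refine setLIntegral_mono' hXm.compl fun x hx => ?_
    have hx' : ¬ segment ℝ x (x + ρ) ⊆ Ω := hx
    have w1 := hWx x fun h => seg_bad ho h hx' (by rw [dist_self_add_right])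
    have w2 := hWx (x + ρ) fun h => seg_bad ho h (by rwa [segment_symm]) (by rw [dist_self_add_left])
    rw [← mul_add]
    refine le_trans ?_ (mul_le_mul_of_nonneg_left (add_le_add w2 w1) (by simp))
    exact sq_two _ _
  rw [lintegral_add_right _ (hWm.const_mul 2), lintegral_const_mul' _ _ (by simp),
    lintegral_const_mul' _ _ (by simp), lintegral_add_right_eq_self W ρ, ← two_mul, ← mul_assoc] at h2
  rw [← lintegral_add_compl _ hXm]
  refine (add_le_add h1 (h2.trans (mul_le_mul_of_nonneg_left hWi (by simp)))).trans ?_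
  rw [show (2 * 2 : ENNReal) = ENNReal.ofReal 4 by
    rw [ENNReal.ofReal_ofNat]; norm_num, ← ENNReal.ofReal_mul (by norm_num),
    ← ENNReal.ofReal_add]
  · refine ENNReal.ofReal_le_ofReal ?_
    have hs0 := sqL2_nonneg T u
    have a1 : cL K R0 * r * (T.gradSq u + T.jumpSq u) ≤ cL K R0 * r * T.normSq u := by
      refine mul_le_mul_of_nonneg_left ?_ (by positivity)
      unfold Triangulation.normSq; linarith
    have a2 : 0 ≤ r * T.normSq u := by positivity
    linarith
  · have := gradSq_nonneg T u
    have := jumpSq_nonneg T u hu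
    positivity
  · positivity

/-- Shift continuity of piecewise `H¹` functions: if `v` is the extension of `u ∈ H¹_h`
by zero to the plane, then `∫_{ℝ²} (v(x+ρ) − v(x))² dx ≤ C |ρ| ‖u‖²_{H¹_h}`, with `C`
depending only on `Ω` and `𝒦`. -/
theorem shift_continuity (Ω : Set Pt) (hΩ : IsPolygon Ω) (K : ℝ) :
    ∃ C : ℝ, 0 < C ∧ ∀ T : Triangulation Ω, T.ShapeRegular K →
      ∀ (u : Tri → Pt → ℝ) (v : Pt → ℝ), T.PwH1 u → T.Glues u v →
        ∀ ρ : Pt, (∫ x, (v (x + ρ) - v x) ^ 2) ≤ C * ‖ρ‖ * T.normSq u := by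
  obtain ⟨-, hbd, S, hS, hΩS⟩ := hΩ
  obtain ⟨R0, hR, hball⟩ := hbd.subset_ball_lt 0 0
  obtain ⟨Cb, hCb, hctrl⟩ := Bad_ctrl (K := K) hR hball hS hΩS
  have hc := cL_nonneg K hR
  refine ⟨cL K R0 + 4 * Cb + 1, by positivity, fun T hK u v hu hg ρ => ?_⟩
  have hn := normSq_nonneg T hu
  rcases eq_or_ne ρ 0 with rfl | hρ
  · simp
  have hρ' : 0 < ‖ρ‖ := norm_pos_iff.mpr hρ
  have hae := glue_ae T hg
  have hae2 : ∀ᵐ x : Pt, v (x + ρ) = Vf T u (x + ρ) :=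
    (measurePreserving_add_right volume ρ).quasiMeasurePreserving.ae hae
  have hV := Vf_meas T hu
  rw [integral_congr_ae (g := fun x => (Vf T u (x + ρ) - Vf T u x) ^ 2) (by
    filter_upwards [hae, hae2] with x h1 h2
    rw [h1, h2]), integral_eq_lintegral_of_nonneg_ae
      (f := fun x => (Vf T u (x + ρ) - Vf T u x) ^ 2) (ae_of_all _ fun x => sq_nonneg _)
      (((hV.comp (measurable_id.add_const _)).sub hV).pow_const 2).aestronglyMeasurable]
  exact ENNReal.toReal_le_of_le_ofReal (by positivity)
    (main_lint hR hball hCb T hK hu hρ' (hctrl T hK u hu _ hρ'))
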